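/- arXiv:2201.09719 — 6 statements merged into one kernel-verified Lean document; each statement's English description precedes it below -/
import Mathlib

section
/- Let L0, L1, L2, L3 be Lagrangian subspaces of a finite-dimensional real symplectic vector space (Σ, σ). Then the alternating sum of negative Maslov indices satisfies: −i(L1,L2,L3) + i(L0,L2,L3) − i(L0,L1,L3) + i(L0,L1,L2) = dim(L1 ∩ L3) − dim(L0 ∩ L2) − dim(L1 ∩ L2 ∩ L3) + dim(L0 ∩ L2 ∩ L3) − dim(L0 ∩ L1 ∩ L3) + dim(L0 ∩ L1 ∩ L2). -/
/-- The symplectic (skew) orthogonal of a subspace `W` with respect to a bilinear form `σ`: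
`W^⊥ = {u : σ u w = 0 for all w ∈ W}`. -/
def sympOrth {E : Type*} [AddCommGroup E] [Module ℝ E]
    (σ : LinearMap.BilinForm ℝ E) (W : Submodule ℝ E) : Submodule ℝ E where
  carrier := {u | ∀ w ∈ W, σ u w = 0}
  add_mem' := by
    intro a b ha hb w hw
    simp [map_add, ha w hw, hb w hw]
  zero_mem' := by
    intro w hw
    simp
  smul_mem' := by
    intro c u hu w hw
    simp [hu w hw]

/-- A subspace is Lagrangian when it coincides with its symplectic orthogonal. -/
def IsLagrangian {E : Type*} [AddCommGroup E] [Module ℝ E]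
    (σ : LinearMap.BilinForm ℝ E) (L : Submodule ℝ E) : Prop :=
  L = sympOrth σ L

/-- The negative Maslov index `i(L0, L1, L2)` of a triple of Lagrangian subspaces:
the negative inertia index of the Maslov form `m(l1) = σ(l0, l2)` (with `l1 = l0 + l2`,
`l0 ∈ L0`, `l2 ∈ L2`) defined on `L1 ∩ (L0 + L2)`, i.e. the supremum of dimensions of
subspaces on which the Maslov form is negative definite. -/
noncomputable def maslovIndex {E : Type*} [AddCommGroup E] [Module ℝ E]
    (σ : LinearMap.BilinForm ℝ E) (L0 L1 L2 : Submodule ℝ E) : ℕ :=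
  sSup {d : ℕ | ∃ W : Submodule ℝ E, W ≤ L1 ⊓ (L0 ⊔ L2) ∧
    (∀ v ∈ W, v ≠ 0 → ∀ l0 ∈ L0, ∀ l2 ∈ L2, v = l0 + l2 → σ l0 l2 < 0) ∧
    Module.finrank ℝ ↥W = d}

/-- `B` restricted to `T` has negative inertia index `k`. -/
def HasNeg {M : Type*} [AddCommGroup M] [Module ℝ M] (B : LinearMap.BilinForm ℝ M)
    (T : Submodule ℝ M) (k : ℕ) : Prop :=
  ∃ W P : Submodule ℝ M, W ⊔ P = T ∧ Module.finrank ℝ W = k ∧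
    (∀ x ∈ W, x ≠ 0 → B x x < 0) ∧ (∀ x ∈ P, 0 ≤ B x x)

section gen
variable {M : Type*} [AddCommGroup M] [Module ℝ M] [FiniteDimensional ℝ M]
variable {M' : Type*} [AddCommGroup M'] [Module ℝ M'] [FiniteDimensional ℝ M']

theorem neg_disj {B : LinearMap.BilinForm ℝ M} {W P : Submodule ℝ M}
    (hW : ∀ x ∈ W, x ≠ 0 → B x x < 0) (hP : ∀ x ∈ P, 0 ≤ B x x) : Disjoint W P := by
  rw [Submodule.disjoint_def]
  intro x hx hx'
  by_contra h
  exact absurd (hW x hx h) (not_lt.mpr (hP x hx'))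

theorem finrank_sup_disj {W P : Submodule ℝ M} (h : Disjoint W P) :
    Module.finrank ℝ ↥(W ⊔ P) = Module.finrank ℝ W + Module.finrank ℝ P := by
  have := Submodule.finrank_sup_add_finrank_inf_eq W P
  rw [h.eq_bot, finrank_bot] at this
  omega

theorem HasNeg.unique {B : LinearMap.BilinForm ℝ M} {T : Submodule ℝ M} {k l : ℕ}
    (h : HasNeg B T k) (h' : HasNeg B T l) : k = l := by
  have key : ∀ {k l : ℕ}, HasNeg B T k → HasNeg B T l → k ≤ l := by
    rintro k l ⟨W, P, hT, rfl, hW, hP⟩ ⟨W', P', hT', rfl, hW', hP'⟩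
    have h1 := finrank_sup_disj (neg_disj hW' hP')
    have h2 := finrank_sup_disj (neg_disj hW hP')
    have h3 : W ⊔ P' ≤ W' ⊔ P' := by
      rw [hT']; exact sup_le (hT ▸ le_sup_left) (hT' ▸ le_sup_right)
    have := Submodule.finrank_mono h3
    omega
  exact le_antisymm (key h h') (key h' h)

theorem HasNeg.exists {B : LinearMap.BilinForm ℝ M} (hB : ∀ x y, B x y = B y x)
    (T : Submodule ℝ M) : ∃ k, HasNeg B T k := by
  let S : Set ℕ := {d | ∃ W : Submodule ℝ M, W ≤ T ∧ Module.finrank ℝ W = d ∧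
    ∀ x ∈ W, x ≠ 0 → B x x < 0}
  have hne : S.Nonempty := ⟨0, ⊥, bot_le, by simp, by
    intro x hx h; exact absurd ((Submodule.mem_bot ℝ).1 hx) h⟩
  have hbdd : BddAbove S := ⟨Module.finrank ℝ M, by
    rintro d ⟨W, -, rfl, -⟩; exact Submodule.finrank_le W⟩
  obtain ⟨W, hWT, hk, hW⟩ := Nat.sSup_mem hne hbdd
  have hrefl : B.IsRefl := fun x y h => by rw [hB]; exact h
  have hd : Disjoint W (B.orthogonal W) := by
    rw [Submodule.disjoint_def]
    intro x hx hx'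
    by_contra h
    have h1 := hW x hx h
    have h2 : B x x = 0 := LinearMap.BilinForm.mem_orthogonal_iff.1 hx' x hx
    linarith
  have hc := (LinearMap.BilinForm.isCompl_orthogonal_iff_disjoint hrefl).2 hd
  refine ⟨sSup S, W, B.orthogonal W ⊓ T, ?_, hk, hW, ?_⟩
  · rw [← sup_inf_assoc_of_le _ hWT, hc.sup_eq_top, top_inf_eq]
  · rintro x ⟨hx, hxT⟩
    by_contra hneg
    push Not at hneg
    have hx0 : x ≠ 0 := by rintro rfl; simp at hneg
    have hxW : ∀ w ∈ W, B w x = 0 := LinearMap.BilinForm.mem_orthogonal_iff.1 hx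
    have hdis : Disjoint W (ℝ ∙ x) :=
      hd.mono_right ((Submodule.span_singleton_le_iff_mem _ _).2 hx)
    have hf := finrank_sup_disj hdis
    rw [finrank_span_singleton hx0, hk] at hf
    have hmem : sSup S + 1 ∈ S := by
      refine ⟨W ⊔ ℝ ∙ x, sup_le hWT ((Submodule.span_singleton_le_iff_mem _ _).2 hxT), hf, ?_⟩
      intro y hy hy0
      obtain ⟨w, hw, z, hz, rfl⟩ := Submodule.mem_sup.1 hy
      obtain ⟨c, rfl⟩ := Submodule.mem_span_singleton.1 hz
      have e : B (w + c • x) (w + c • x) = B w w + c ^ 2 * B x x := by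
        simp [hxW w hw, hB x w]; ring
      rw [e]
      by_cases hw0 : w = 0
      · subst hw0
        have : c ≠ 0 := by rintro rfl; simp at hy0
        have : 0 < c ^ 2 := by positivity
        simp; nlinarith
      · have := hW w hw hw0
        nlinarith [sq_nonneg c]
    have := le_csSup hbdd hmem
    omega

theorem HasNeg.prod {B : LinearMap.BilinForm ℝ M} {B' : LinearMap.BilinForm ℝ M'}
    {T : Submodule ℝ M} {T' : Submodule ℝ M'} {C : LinearMap.BilinForm ℝ (M × M')}
    (hC : ∀ x, C x x = B x.1 x.1 + B' x.2 x.2)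
    {k l : ℕ} (h : HasNeg B T k) (h' : HasNeg B' T' l) : HasNeg C (T.prod T') (k + l) := by
  obtain ⟨W, P, rfl, rfl, hW, hP⟩ := h
  obtain ⟨W', P', rfl, rfl, hW', hP'⟩ := h'
  refine ⟨W.prod W', P.prod P', Submodule.prod_sup_prod .., ?_, ?_, ?_⟩
  · have e : W.prod W' = LinearMap.range (W.subtype.prodMap W'.subtype) := by
      rw [LinearMap.range_prodMap]; simp
    rw [e, LinearMap.finrank_range_of_inj, Module.finrank_prod]
    exact Function.Injective.prodMap W.injective_subtype W'.injective_subtype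
  · rintro ⟨x, y⟩ ⟨hx, hy⟩ hne
    rw [hC]
    simp only at hx hy ⊢
    by_cases hx0 : x = 0
    · subst hx0
      have : y ≠ 0 := by rintro rfl; exact hne rfl
      simpa using hW' y hy this
    · have := hW x hx hx0
      by_cases hy0 : y = 0
      · subst hy0; simpa using this
      · linarith [hW' y hy hy0]
  · rintro ⟨x, y⟩ ⟨hx, hy⟩
    rw [hC]
    exact add_nonneg (hP x hx) (hP' y hy)

theorem exists_posdef (J : Submodule ℝ M) :
    ∃ g : LinearMap.BilinForm ℝ J, ∀ j, j ≠ 0 → 0 < g j j := by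
  let e : J ≃ₗ[ℝ] EuclideanSpace ℝ (Fin (Module.finrank ℝ J)) :=
    LinearEquiv.ofFinrankEq _ _ (by simp)
  refine ⟨(innerₗ (EuclideanSpace ℝ (Fin (Module.finrank ℝ J)))).compl₁₂ e.toLinearMap
    e.toLinearMap, fun j hj => ?_⟩
  have : e j ≠ 0 := by simpa using hj
  simp only [LinearMap.compl₁₂_apply, innerₗ_apply_apply, LinearEquiv.coe_coe]
  exact real_inner_self_pos.2 this

theorem HasNeg.reduce {B : LinearMap.BilinForm ℝ M} (hB : ∀ x y, B x y = B y x)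
    {B' : LinearMap.BilinForm ℝ M'} {T : Submodule ℝ M} {T' : Submodule ℝ M'}
    (f : M' →ₗ[ℝ] M) (I : Submodule ℝ M) (hIT : I ≤ T)
    (hI : ∀ c ∈ I, ∀ d ∈ I, B c d = 0)
    (hf : ∀ x ∈ T', B (f x) (f x) = B' x x)
    (hR : ∀ x, x ∈ T'.map f ↔ x ∈ T ∧ ∀ c ∈ I, B x c = 0)
    {k r : ℕ} (hr : Module.finrank ℝ T = Module.finrank ℝ (T'.map f) + r)
    (h : HasNeg B' T' k) : HasNeg B T (k + r) := by
  obtain ⟨W, P, hT', rfl, hW, hP⟩ := h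
  have hWT : W ≤ T' := hT' ▸ le_sup_left
  have hPT : P ≤ T' := hT' ▸ le_sup_right
  have hRT : T'.map f ≤ T := fun x hx => ((hR x).1 hx).1
  obtain ⟨C, hC⟩ := Submodule.exists_isCompl (T'.map f)
  set J := C ⊓ T with hJ
  have hRJ : T'.map f ⊔ J = T := by
    rw [hJ, ← sup_inf_assoc_of_le _ hRT, hC.sup_eq_top, top_inf_eq]
  have hdJ : Disjoint (T'.map f) J := hC.disjoint.mono_right inf_le_left
  have hJr : Module.finrank ℝ J = r := by
    have := finrank_sup_disj hdJ
    rw [hRJ] at this; omega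
  -- pairing
  let g : J →ₗ[ℝ] Module.Dual ℝ I := B.compl₁₂ J.subtype I.subtype
  have hg : Function.Injective g := by
    rw [← LinearMap.ker_eq_bot, Submodule.eq_bot_iff]
    intro j hj
    have hj' : ∀ c ∈ I, B j c = 0 := fun c hc => by
      have := LinearMap.congr_fun (LinearMap.mem_ker.1 hj) ⟨c, hc⟩
      simpa [g] using this
    have : (j : M) ∈ T'.map f := (hR _).2 ⟨j.2.2, hj'⟩
    exact Subtype.ext ((Submodule.disjoint_def.1 hdJ) _ this j.2)
  have hsurj : Function.Surjective g.flip := by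
    intro φ
    obtain ⟨ξ, hξ⟩ := LinearMap.dualMap_surjective_of_injective hg φ
    refine ⟨(Module.evalEquiv ℝ I).symm ξ, ?_⟩
    ext j
    rw [← hξ]
    simp [LinearMap.flip_apply]
  obtain ⟨s, hs⟩ := g.flip.exists_rightInverse_of_surjective (LinearMap.range_eq_top.2 hsurj)
  obtain ⟨G, hG⟩ := exists_posdef J
  -- target functional
  let c1 : W →ₗ[ℝ] Module.Dual ℝ J :=
    -(B.compl₁₂ (f ∘ₗ W.subtype) J.subtype)
  let c2 : J →ₗ[ℝ] Module.Dual ℝ J := -((1/2 : ℝ) • (B.compl₁₂ J.subtype J.subtype + G))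
  let φ : (W × J) →ₗ[ℝ] I := s ∘ₗ (c1.coprod c2)
  let ψ : (W × J) →ₗ[ℝ] M :=
    (f ∘ₗ W.subtype).coprod J.subtype + I.subtype ∘ₗ φ
  have hφ : ∀ x : W × J, B (x.2 : M) (φ x : M) =
      - B (f x.1) x.2 - (1/2) * (B x.2 x.2 + G x.2 x.2) := by
    intro x
    have h1 := LinearMap.congr_fun hs ((c1.coprod c2) x)
    have h2 := LinearMap.congr_fun h1 x.2
    have h3 : g.flip (s ((c1.coprod c2) x)) x.2 = B (x.2 : M) (φ x : M) := rfl
    simp only [LinearMap.comp_apply, LinearMap.id_apply] at h2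
    rw [h3] at h2
    rw [h2]
    simp [c1, c2]
    ring
  have hQ : ∀ x : W × J, B (ψ x) (ψ x) = B' x.1 x.1 - G x.2 x.2 := by
    intro x
    have e1 : ψ x = f x.1 + x.2 + φ x := rfl
    have e2 := hφ x
    have e3 : B (f x.1) (φ x : M) = 0 :=
      ((hR _).1 (Submodule.mem_map_of_mem (hWT x.1.2))).2 _ (φ x).2
    have e4 := hI _ (φ x).2 _ (φ x).2
    have e5 := hf _ (hWT x.1.2)
    rw [e1]
    simp only [map_add, LinearMap.add_apply]
    rw [hB (φ x) (f x.1), hB (φ x) x.2, hB x.2 (f x.1), e2, e3, e4, e5]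
    ring
  have hneg : ∀ x : W × J, x ≠ 0 → B (ψ x) (ψ x) < 0 := by
    rintro ⟨w, j⟩ hx
    rw [hQ]
    simp only
    by_cases hj : j = 0
    · subst hj
      have hw : (w : M') ≠ 0 := by
        intro h; apply hx; ext <;> simp [h]
      simpa using hW w w.2 hw
    · have h1 := hG j hj
      by_cases hw : (w : M') = 0
      · simp [hw, h1]
      · linarith [hW w w.2 hw]
  have hinj : Function.Injective ψ := by
    rw [← LinearMap.ker_eq_bot, Submodule.eq_bot_iff]
    intro x hx
    by_contra h0
    have := hneg x h0
    rw [LinearMap.mem_ker.1 hx] at this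
    simp at this
  have hnegR : ∀ y ∈ LinearMap.range ψ, y ≠ 0 → B y y < 0 := by
    rintro _ ⟨x, rfl⟩ hx
    exact hneg x (by rintro rfl; simp at hx)
  have hposR : ∀ y ∈ P.map f, 0 ≤ B y y := by
    rintro _ ⟨x, hx, rfl⟩
    rw [hf x (hPT hx)]; exact hP x hx
  have hfr : Module.finrank ℝ (LinearMap.range ψ) = Module.finrank ℝ W + r := by
    rw [LinearMap.finrank_range_of_inj hinj, Module.finrank_prod, hJr]
  refine ⟨LinearMap.range ψ, P.map f, ?_, hfr, hnegR, hposR⟩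
  apply Submodule.eq_of_le_of_finrank_le
  · apply sup_le
    · rintro _ ⟨x, rfl⟩
      exact add_mem (add_mem (hRT (Submodule.mem_map_of_mem (hWT x.1.2))) x.2.2.2) (hIT (φ x).2)
    · exact (Submodule.map_mono hPT).trans hRT
  · rw [finrank_sup_disj (neg_disj hnegR hposR), hfr, hr, ← hT', Submodule.map_sup]
    have h1 := Submodule.finrank_add_le_finrank_add_finrank (W.map f) (P.map f)
    have h2 := Submodule.finrank_map_le f W
    omega

end gen

theorem HasNeg.transport {M : Type*} [AddCommGroup M] [Module ℝ M] [FiniteDimensional ℝ M]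
    {M' : Type*} [AddCommGroup M'] [Module ℝ M'] [FiniteDimensional ℝ M']
    {B : LinearMap.BilinForm ℝ M} (hB : ∀ x y, B x y = B y x)
    {B' : LinearMap.BilinForm ℝ M'} {T : Submodule ℝ M} {T' : Submodule ℝ M'}
    (f : M' →ₗ[ℝ] M) (hf : ∀ x ∈ T', B (f x) (f x) = B' x x)
    (hR : T'.map f = T) {k : ℕ} (h : HasNeg B' T' k) : HasNeg B T k := by
  refine HasNeg.reduce (r := 0) hB f ⊥ bot_le ?_ hf ?_ (by rw [hR]; rfl) h
  · intro c hc d _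
    rw [(Submodule.mem_bot ℝ).1 hc]; simp
  · intro x
    rw [hR]
    constructor
    · intro hx
      refine ⟨hx, fun c hc => ?_⟩
      rw [(Submodule.mem_bot ℝ).1 hc]; simp
    · exact fun h => h.1

theorem finrank_map_ker {M : Type*} [AddCommGroup M] [Module ℝ M] [FiniteDimensional ℝ M]
    {E : Type*} [AddCommGroup E] [Module ℝ E]
    (p : M →ₗ[ℝ] E) (T : Submodule ℝ M) :
    Module.finrank ℝ (T.map p) + Module.finrank ℝ ↥(T ⊓ LinearMap.ker p) =
      Module.finrank ℝ T := by
  have h := LinearMap.finrank_range_add_finrank_ker (p ∘ₗ T.subtype)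
  rw [LinearMap.range_comp, Submodule.range_subtype, LinearMap.ker_comp] at h
  rw [← h, ← Submodule.map_comap_subtype, Submodule.finrank_map_subtype_eq]

theorem codim_comap {M : Type*} [AddCommGroup M] [Module ℝ M] [FiniteDimensional ℝ M]
    {E : Type*} [AddCommGroup E] [Module ℝ E]
    (p : M →ₗ[ℝ] E) (T : Submodule ℝ M) (S : Submodule ℝ E) :
    Module.finrank ℝ T + Module.finrank ℝ ↥(T.map p ⊓ S) =
      Module.finrank ℝ ↥(T ⊓ S.comap p) + Module.finrank ℝ ↥(T.map p) := by
  have h1 := finrank_map_ker p T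
  have h2 := finrank_map_ker p (T ⊓ S.comap p)
  have e1 : T ⊓ S.comap p ⊓ LinearMap.ker p = T ⊓ LinearMap.ker p := by
    ext x
    simp only [Submodule.mem_inf, Submodule.mem_comap, LinearMap.mem_ker]
    constructor
    · rintro ⟨⟨a, b⟩, c⟩; exact ⟨a, c⟩
    · rintro ⟨a, c⟩; exact ⟨⟨a, by rw [c]; exact S.zero_mem⟩, c⟩
  have e2 : (T ⊓ S.comap p).map p = T.map p ⊓ S := by
    ext y
    simp only [Submodule.mem_inf, Submodule.mem_map, Submodule.mem_comap]
    constructor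
    · rintro ⟨x, ⟨a, b⟩, rfl⟩; exact ⟨⟨x, a, rfl⟩, b⟩
    · rintro ⟨⟨x, a, rfl⟩, b⟩; exact ⟨x, ⟨a, b⟩, rfl⟩
  rw [e1, e2] at h2
  omega

section spec
variable {E : Type*} [AddCommGroup E] [Module ℝ E]

def T3 (A B C : Submodule ℝ E) : Submodule ℝ (E × E × E) where
  carrier := {x | x.1 ∈ A ∧ x.2.1 ∈ B ∧ x.2.2 ∈ C ∧ x.1 + x.2.1 + x.2.2 = 0}
  add_mem' := by
    rintro x y ⟨a, b, c, d⟩ ⟨a', b', c', d'⟩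
    refine ⟨add_mem a a', add_mem b b', add_mem c c', ?_⟩
    have : (x + y).1 + (x + y).2.1 + (x + y).2.2 =
      (x.1 + x.2.1 + x.2.2) + (y.1 + y.2.1 + y.2.2) := by simp; abel
    rw [this, d, d', add_zero]
  zero_mem' := by simp
  smul_mem' := by
    rintro t x ⟨a, b, c, d⟩
    refine ⟨A.smul_mem t a, B.smul_mem t b, C.smul_mem t c, ?_⟩
    simp [← smul_add, d]

def T4 (A B C D : Submodule ℝ E) : Submodule ℝ (E × E × E × E) where
  carrier := {x | x.1 ∈ A ∧ x.2.1 ∈ B ∧ x.2.2.1 ∈ C ∧ x.2.2.2 ∈ D ∧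
    x.1 + x.2.1 + x.2.2.1 + x.2.2.2 = 0}
  add_mem' := by
    rintro x y ⟨a, b, c, e, d⟩ ⟨a', b', c', e', d'⟩
    refine ⟨add_mem a a', add_mem b b', add_mem c c', add_mem e e', ?_⟩
    have : (x + y).1 + (x + y).2.1 + (x + y).2.2.1 + (x + y).2.2.2 =
      (x.1 + x.2.1 + x.2.2.1 + x.2.2.2) + (y.1 + y.2.1 + y.2.2.1 + y.2.2.2) := by simp; abel
    rw [this, d, d', add_zero]
  zero_mem' := by simp
  smul_mem' := by
    rintro t x ⟨a, b, c, e, d⟩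
    refine ⟨A.smul_mem t a, B.smul_mem t b, C.smul_mem t c, D.smul_mem t e, ?_⟩
    simp [← smul_add, d]

theorem mem_T3 {A B C : Submodule ℝ E} {a b c : E} : (a, b, c) ∈ T3 A B C ↔
    a ∈ A ∧ b ∈ B ∧ c ∈ C ∧ a + b + c = 0 := Iff.rfl

theorem mem_T4 {A B C D : Submodule ℝ E} {a b c d : E} : (a, b, c, d) ∈ T4 A B C D ↔
    a ∈ A ∧ b ∈ B ∧ c ∈ C ∧ d ∈ D ∧ a + b + c + d = 0 := Iff.rfl

def B3 (σ : LinearMap.BilinForm ℝ E) : LinearMap.BilinForm ℝ (E × E × E) :=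
  LinearMap.mk₂ ℝ (fun x y => -(σ x.1 y.2.1 + σ y.1 x.2.1))
    (by intros; simp; ring) (by intros; simp; ring) (by intros; simp; ring)
    (by intros; simp; ring)

def B4 (σ : LinearMap.BilinForm ℝ E) : LinearMap.BilinForm ℝ (E × E × E × E) :=
  LinearMap.mk₂ ℝ (fun x y => -(σ x.1 y.2.1 + σ y.1 x.2.1 + σ x.2.2.1 y.2.2.2
      + σ y.2.2.1 x.2.2.2))
    (by intros; simp; ring) (by intros; simp; ring) (by intros; simp; ring)
    (by intros; simp; ring)

theorem B3_apply (σ : LinearMap.BilinForm ℝ E) (x y : E × E × E) :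
    B3 σ x y = -(σ x.1 y.2.1 + σ y.1 x.2.1) := rfl

theorem B4_apply (σ : LinearMap.BilinForm ℝ E) (x y : E × E × E × E) :
    B4 σ x y = -(σ x.1 y.2.1 + σ y.1 x.2.1 + σ x.2.2.1 y.2.2.2 + σ y.2.2.1 x.2.2.2) := rfl

theorem B3_symm (σ : LinearMap.BilinForm ℝ E) (x y : E × E × E) :
    B3 σ x y = B3 σ y x := by rw [B3_apply, B3_apply]; ring

theorem B4_symm (σ : LinearMap.BilinForm ℝ E) (x y : E × E × E × E) :
    B4 σ x y = B4 σ y x := by rw [B4_apply, B4_apply]; ring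

theorem skew {σ : LinearMap.BilinForm ℝ E} (halt : ∀ v, σ v v = 0) (x y : E) :
    σ x y = - σ y x := by
  have := halt (x + y)
  simp [halt] at this
  linarith

theorem IsLagrangian.iso {σ : LinearMap.BilinForm ℝ E} {L : Submodule ℝ E}
    (h : IsLagrangian σ L) {x y : E} (hx : x ∈ L) (hy : y ∈ L) : σ x y = 0 := by
  have h' : L = sympOrth σ L := h
  rw [h'] at hx
  exact hx y hy

theorem sympOrth_eq {σ : LinearMap.BilinForm ℝ E} (halt : ∀ v, σ v v = 0)
    (L : Submodule ℝ E) : sympOrth σ L = σ.orthogonal L := by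
  ext x
  rw [LinearMap.BilinForm.mem_orthogonal_iff]
  constructor
  · intro h n hn; rw [skew halt, h n hn, neg_zero]
  · intro h n hn; rw [skew halt, h n hn, neg_zero]

variable [FiniteDimensional ℝ E]

theorem cyc3 {σ : LinearMap.BilinForm ℝ E} (halt : ∀ v, σ v v = 0) {A B C : Submodule ℝ E}
    {k : ℕ} (h : HasNeg (B3 σ) (T3 A B C) k) : HasNeg (B3 σ) (T3 C A B) k := by
  let f : E × E × E →ₗ[ℝ] E × E × E :=
    { toFun := fun x => (x.2.2, x.1, x.2.1)
      map_add' := fun _ _ => rfl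
      map_smul' := fun _ _ => rfl }
  refine HasNeg.transport (B3_symm σ) f ?_ ?_ h
  · rintro ⟨a, b, c⟩ ⟨ha, hb, hc, h0⟩
    simp only at h0
    have : c = -a - b := by rw [← sub_eq_zero, ← h0]; abel
    subst this
    simp only [B3_apply, f, LinearMap.coe_mk, AddHom.coe_mk]
    simp [halt, skew halt b a]
  · ext ⟨c, a, b⟩
    constructor
    · rintro ⟨⟨a', b', c'⟩, ⟨ha, hb, hc, h0⟩, h⟩
      cases h
      exact ⟨hc, ha, hb, by rw [← h0]; simp only; abel⟩
    · rintro ⟨hc, ha, hb, h0⟩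
      exact ⟨(a, b, c), ⟨ha, hb, hc, by rw [← h0]; simp only; abel⟩, rfl⟩

theorem cyc4 {σ : LinearMap.BilinForm ℝ E} (halt : ∀ v, σ v v = 0) {A B C D : Submodule ℝ E}
    {k : ℕ} (h : HasNeg (B4 σ) (T4 A B C D) k) : HasNeg (B4 σ) (T4 D A B C) k := by
  let f : E × E × E × E →ₗ[ℝ] E × E × E × E :=
    { toFun := fun x => (x.2.2.2, x.1, x.2.1, x.2.2.1)
      map_add' := fun _ _ => rfl
      map_smul' := fun _ _ => rfl }
  refine HasNeg.transport (B4_symm σ) f ?_ ?_ h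
  · rintro ⟨a, b, c, d⟩ ⟨ha, hb, hc, hd, h0⟩
    simp only at h0
    have : d = -a - b - c := by rw [← sub_eq_zero, ← h0]; abel
    subst this
    simp only [B4_apply, f, LinearMap.coe_mk, AddHom.coe_mk]
    simp [halt, skew halt b a, skew halt c a, skew halt c b]
    try ring
  · ext ⟨d, a, b, c⟩
    constructor
    · rintro ⟨⟨a', b', c', d'⟩, ⟨ha, hb, hc, hd, h0⟩, h⟩
      cases h
      exact ⟨hd, ha, hb, hc, by rw [← h0]; simp only; abel⟩
    · rintro ⟨hd, ha, hb, hc, h0⟩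
      exact ⟨(a, b, c, d), ⟨ha, hb, hc, hd, by rw [← h0]; simp only; abel⟩, rfl⟩

theorem maslov_eq {σ : LinearMap.BilinForm ℝ E} (halt : ∀ v, σ v v = 0)
    {A B C : Submodule ℝ E} (hA : IsLagrangian σ A) (hC : IsLagrangian σ C)
    {k : ℕ} (h : HasNeg (B3 σ) (T3 A B C) k) : maslovIndex σ A B C = k := by
  obtain ⟨W, P, hT, rfl, hW, hP⟩ := h
  let p : E × E × E →ₗ[ℝ] E :=
    { toFun := fun x => x.2.1
      map_add' := fun _ _ => rfl
      map_smul' := fun _ _ => rfl }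
  have hWT : W ≤ T3 A B C := hT ▸ le_sup_left
  have hPT : P ≤ T3 A B C := hT ▸ le_sup_right
  -- value of the form
  have hval : ∀ x ∈ T3 A B C, ∀ a ∈ A, ∀ c ∈ C, p x = a + c → B3 σ x x = 2 * σ a c := by
    rintro ⟨x, y, z⟩ ⟨hx, hy, hz, h0⟩ a ha c hc h
    simp only at hx hy hz h0
    have hy' : y = a + c := h
    subst hy'
    have hu : x + a = -(c + z) := by rw [← sub_eq_zero, ← h0]; abel
    have h1 : σ (x + a) c = 0 := by
      rw [hu]; exact hC.iso (neg_mem (add_mem hc hz)) hc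
    have h2 := hA.iso hx ha
    simp only [B3_apply, map_add]
    simp at h1
    linarith
  have hrange : (T3 A B C).map p = B ⊓ (A ⊔ C) := by
    ext y
    constructor
    · rintro ⟨⟨x, y, z⟩, ⟨hx, hy, hz, h0⟩, rfl⟩
      refine ⟨hy, Submodule.mem_sup.2 ⟨-x, neg_mem hx, -z, neg_mem hz, ?_⟩⟩
      show -x + -z = y
      simp only at h0
      symm
      rw [← sub_eq_zero, ← h0]; abel
    · rintro ⟨hy, hy'⟩
      obtain ⟨a, ha, c, hc, rfl⟩ := Submodule.mem_sup.1 hy'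
      exact ⟨(-a, a + c, -c), ⟨neg_mem ha, hy, neg_mem hc, by simp⟩, rfl⟩
  have hdec : ∀ x ∈ T3 A B C, ∃ a ∈ A, ∃ c ∈ C, p x = a + c := by
    intro x hx
    have : p x ∈ B ⊓ (A ⊔ C) := hrange ▸ Submodule.mem_map_of_mem hx
    obtain ⟨a, ha, c, hc, h⟩ := Submodule.mem_sup.1 this.2
    exact ⟨a, ha, c, hc, h.symm⟩
  have hinj : Module.finrank ℝ (W.map p) = Module.finrank ℝ W := by
    have h1 := finrank_map_ker p W
    have : W ⊓ LinearMap.ker p = ⊥ := by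
      rw [Submodule.eq_bot_iff]
      rintro x ⟨hx, hx0⟩
      by_contra hne
      have h2 := hW x hx hne
      rw [hval x (hWT hx) 0 A.zero_mem 0 C.zero_mem (by rw [LinearMap.mem_ker.1 hx0]; simp)] at h2
      simp at h2
    rw [this, finrank_bot] at h1
    exact h1
  have hg : IsGreatest {d : ℕ | ∃ W : Submodule ℝ E, W ≤ B ⊓ (A ⊔ C) ∧
    (∀ v ∈ W, v ≠ 0 → ∀ l0 ∈ A, ∀ l2 ∈ C, v = l0 + l2 → σ l0 l2 < 0) ∧
    Module.finrank ℝ ↥W = d} (Module.finrank ℝ W) := by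
    constructor
    · refine ⟨W.map p, hrange ▸ Submodule.map_mono hWT, ?_, hinj⟩
      rintro _ ⟨x, hx, rfl⟩ hne a ha c hc hac
      have h1 := hval x (hWT hx) a ha c hc hac
      have h2 := hW x hx (by rintro rfl; simp at hne)
      linarith
    · rintro d ⟨V, hV, hVn, rfl⟩
      have hdis : Disjoint V (P.map p) := by
        rw [Submodule.disjoint_def]
        rintro _ hv ⟨x, hx, rfl⟩
        by_contra hne
        obtain ⟨a, ha, c, hc, hac⟩ := hdec x (hPT hx)
        have h1 := hVn _ hv hne a ha c hc hac
        have h2 := hP x hx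
        rw [hval x (hPT hx) a ha c hc hac] at h2
        linarith
      have h1 := finrank_sup_disj hdis
      have h2 : V ⊔ P.map p ≤ (W ⊔ P).map p :=
        sup_le (by rw [hT, hrange]; exact hV) (Submodule.map_mono le_sup_right)
      have h3 := Submodule.finrank_mono h2
      rw [Submodule.map_sup] at h3
      have h4 := Submodule.finrank_add_le_finrank_add_finrank (W.map p) (P.map p)
      omega
  exact hg.csSup_eq

theorem lag_dim {σ : LinearMap.BilinForm ℝ E} (halt : ∀ v, σ v v = 0)
    (hnd : LinearMap.BilinForm.Nondegenerate σ) {L : Submodule ℝ E} (h : IsLagrangian σ L)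
    (S : Submodule ℝ E) : Module.finrank ℝ ↥(L ⊓ σ.orthogonal S) + Module.finrank ℝ S =
      Module.finrank ℝ L + Module.finrank ℝ ↥(L ⊓ S) := by
  have hL : L = σ.orthogonal L := by rw [← sympOrth_eq halt]; exact h
  have e : L ⊓ σ.orthogonal S = σ.orthogonal (L ⊔ S) := by
    conv_lhs => rw [hL]
    ext x
    simp only [Submodule.mem_inf, LinearMap.BilinForm.mem_orthogonal_iff]
    constructor
    · rintro ⟨a, b⟩ n hn
      obtain ⟨u, hu, v, hv, rfl⟩ := Submodule.mem_sup.1 hn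
      simp [a u hu, b v hv]
    · intro h
      exact ⟨fun n hn => h n (Submodule.mem_sup_left hn), fun n hn => h n (Submodule.mem_sup_right hn)⟩
  have h1 := LinearMap.BilinForm.finrank_orthogonal hnd (L ⊔ S)
  have h2 := LinearMap.BilinForm.finrank_orthogonal hnd L
  have h3 := Submodule.finrank_sup_add_finrank_inf_eq L S
  have h4 := Submodule.finrank_le (L ⊔ S)
  have h5 := Submodule.finrank_le L
  rw [← hL] at h2
  rw [e, h1]
  omega

theorem orth_inf {σ : LinearMap.BilinForm ℝ E} (halt : ∀ v, σ v v = 0)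
    (hnd : LinearMap.BilinForm.Nondegenerate σ) (S T : Submodule ℝ E) :
    σ.orthogonal (S ⊓ T) = σ.orthogonal S ⊔ σ.orthogonal T := by
  have hr : σ.IsRefl := fun x y h => by rw [skew halt, h, neg_zero]
  rw [← LinearMap.BilinForm.orthogonal_orthogonal hnd hr (σ.orthogonal S ⊔ σ.orthogonal T)]
  congr 1
  apply le_antisymm
  · rintro x ⟨hS, hT⟩ n hn
    obtain ⟨u, hu, v, hv, rfl⟩ := Submodule.mem_sup.1 hn
    have h1 : σ u x = 0 := hr _ _ (hu x hS)
    have h2 : σ v x = 0 := hr _ _ (hv x hT)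
    show σ (u + v) x = 0
    simp [h1, h2]
  · apply le_inf
    · exact (LinearMap.BilinForm.orthogonal_le le_sup_left).trans
        (LinearMap.BilinForm.orthogonal_orthogonal hnd hr S).le
    · exact (LinearMap.BilinForm.orthogonal_le le_sup_right).trans
        (LinearMap.BilinForm.orthogonal_orthogonal hnd hr T).le

theorem glue {σ : LinearMap.BilinForm ℝ E} (halt : ∀ v, σ v v = 0)
    (hnd : LinearMap.BilinForm.Nondegenerate σ) {L0 L1 L2 L3 : Submodule ℝ E}
    (h0 : IsLagrangian σ L0) (h1 : IsLagrangian σ L1)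
    (h2 : IsLagrangian σ L2) (h3 : IsLagrangian σ L3) {k l : ℕ}
    (hk : HasNeg (B3 σ) (T3 L0 L1 L2) k) (hl : HasNeg (B3 σ) (T3 L0 L2 L3) l) :
    ∃ r, HasNeg (B4 σ) (T4 L0 L1 L2 L3) (k + l + r) ∧
      r + Module.finrank ℝ ↥(L0 ⊓ L1 ⊓ L2) + Module.finrank ℝ ↥(L0 ⊓ L2 ⊓ L3) =
      Module.finrank ℝ ↥(L0 ⊓ L2) + Module.finrank ℝ ↥(L0 ⊓ L1 ⊓ L2 ⊓ L3) := by
  have o0 : σ.orthogonal L0 = L0 := by rw [← sympOrth_eq halt]; exact Eq.symm h0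
  have o2 : σ.orthogonal L2 = L2 := by rw [← sympOrth_eq halt]; exact Eq.symm h2
  have o3 : σ.orthogonal L3 = L3 := by rw [← sympOrth_eq halt]; exact Eq.symm h3
  have o02 : σ.orthogonal (L0 ⊓ L2) = L0 ⊔ L2 := by rw [orth_inf halt hnd, o0, o2]
  have o023 : σ.orthogonal (L0 ⊓ L2 ⊓ L3) = L0 ⊔ L2 ⊔ L3 := by
    rw [orth_inf halt hnd, o02, o3]
  let C : LinearMap.BilinForm ℝ ((E × E × E) × (E × E × E)) :=
    (B3 σ).compl₁₂ (LinearMap.fst ℝ _ _) (LinearMap.fst ℝ _ _) +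
    (B3 σ).compl₁₂ (LinearMap.snd ℝ _ _) (LinearMap.snd ℝ _ _)
  have hprod : HasNeg C _ _ := HasNeg.prod (fun x => rfl) hk hl
  let f : (E × E × E) × (E × E × E) →ₗ[ℝ] E × E × E × E :=
    { toFun := fun x => (x.1.1 + x.2.1, x.1.2.1, x.1.2.2 + x.2.2.1, x.2.2.2)
      map_add' := fun x y => by
        ext <;> simp <;> abel
      map_smul' := fun t x => by
        ext <;> simp }
  let p : E × E × E × E →ₗ[ℝ] E :=
    { toFun := fun x => x.2.1
      map_add' := fun _ _ => rfl
      map_smul' := fun _ _ => rfl }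
  let q : E →ₗ[ℝ] E × E × E × E :=
    { toFun := fun c => (c, 0, -c, 0)
      map_add' := fun x y => by ext <;> simp; abel
      map_smul' := fun t x => by ext <;> simp }
  have hrange : ((T3 L0 L1 L2).prod (T3 L0 L2 L3)).map f =
      T4 L0 L1 L2 L3 ⊓ (L0 ⊔ L2).comap p := by
    ext ⟨x0, x1, x2, x3⟩
    constructor
    · rintro ⟨⟨⟨a0, a1, a2⟩, ⟨b0, b2, b3⟩⟩, ⟨⟨ha0, ha1, ha2, ha⟩, ⟨hb0, hb2, hb3, hb⟩⟩, h⟩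
      cases h
      simp only at *
      refine ⟨⟨add_mem ha0 hb0, ha1, add_mem ha2 hb2, hb3, ?_⟩, ?_⟩
      · have : (a0 + a1 + a2) + (b0 + b2 + b3) = 0 := by rw [ha, hb, add_zero]
        rw [← this]; simp only; abel
      · refine Submodule.mem_sup.2 ⟨-a0, neg_mem ha0, -a2, neg_mem ha2, ?_⟩
        show -a0 + -a2 = a1
        symm
        rw [← sub_eq_zero, ← ha]; abel
    · rintro ⟨⟨hx0, hx1, hx2, hx3, hx⟩, hs⟩
      obtain ⟨u, hu, v, hv, huv⟩ := Submodule.mem_sup.1 hs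
      have huv' : u + v = x1 := huv
      subst huv'
      simp only at *
      refine ⟨((-u, u + v, -v), (x0 + u, x2 + v, x3)), ⟨⟨neg_mem hu, hx1, neg_mem hv, by simp⟩,
        ⟨add_mem hx0 hu, add_mem hx2 hv, hx3, ?_⟩⟩, ?_⟩
      · rw [← hx]; simp only; abel
      · ext <;> simp [f]
  have hp : (T4 L0 L1 L2 L3).map p = L1 ⊓ (L0 ⊔ L2 ⊔ L3) := by
    ext y
    constructor
    · rintro ⟨⟨x0, x1, x2, x3⟩, ⟨hx0, hx1, hx2, hx3, hx⟩, rfl⟩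
      refine ⟨hx1, Submodule.mem_sup.2 ⟨-x0 + -x2, Submodule.mem_sup.2
        ⟨-x0, neg_mem hx0, -x2, neg_mem hx2, rfl⟩, -x3, neg_mem hx3, ?_⟩⟩
      show -x0 + -x2 + -x3 = x1
      simp only at hx
      symm
      rw [← sub_eq_zero, ← hx]; abel
    · rintro ⟨hy, hy'⟩
      obtain ⟨w, hw, c, hc, rfl⟩ := Submodule.mem_sup.1 hy'
      obtain ⟨a, ha, b, hb, rfl⟩ := Submodule.mem_sup.1 hw
      exact ⟨(-a, a + b + c, -b, -c), ⟨neg_mem ha, hy, neg_mem hb, neg_mem hc, by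
        simp only; abel⟩, rfl⟩
  have hcod := codim_comap p (T4 L0 L1 L2 L3) (L0 ⊔ L2)
  have hinf : L1 ⊓ (L0 ⊔ L2 ⊔ L3) ⊓ (L0 ⊔ L2) = L1 ⊓ (L0 ⊔ L2) := by
    rw [inf_assoc, inf_eq_right.2 (le_sup_left : L0 ⊔ L2 ≤ L0 ⊔ L2 ⊔ L3)]
  rw [hp, hinf, ← hrange] at hcod
  have d1 := lag_dim halt hnd h1 (L0 ⊓ L2)
  have d2 := lag_dim halt hnd h1 (L0 ⊓ L2 ⊓ L3)
  rw [o02] at d1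
  rw [o023] at d2
  have e1 : L1 ⊓ (L0 ⊓ L2) = L0 ⊓ L1 ⊓ L2 := by ac_rfl
  have e2 : L1 ⊓ (L0 ⊓ L2 ⊓ L3) = L0 ⊓ L1 ⊓ L2 ⊓ L3 := by ac_rfl
  rw [e1] at d1
  rw [e2] at d2
  have hle : Module.finrank ℝ (((T3 L0 L1 L2).prod (T3 L0 L2 L3)).map f) ≤
      Module.finrank ℝ (T4 L0 L1 L2 L3) := by
    apply Submodule.finrank_mono; rw [hrange]; exact inf_le_left
  obtain ⟨r, hr⟩ := Nat.exists_eq_add_of_le hle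
  refine ⟨r, ?_, by omega⟩
  refine HasNeg.reduce (B4_symm σ) f ((L0 ⊓ L2).map q) ?_ ?_ ?_ ?_ hr hprod
  · rintro _ ⟨c, ⟨hc0, hc2⟩, rfl⟩
    exact ⟨hc0, L1.zero_mem, neg_mem hc2, L3.zero_mem, by simp [q]⟩
  · rintro _ ⟨c, hc, rfl⟩ _ ⟨d, hd, rfl⟩
    simp [B4_apply, q]
  · rintro ⟨⟨a0, a1, a2⟩, ⟨b0, b2, b3⟩⟩ ⟨⟨ha0, ha1, ha2, ha⟩, ⟨hb0, hb2, hb3, hb⟩⟩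
    simp only at *
    have t1 : a1 = -a0 - a2 := by rw [← sub_eq_zero, ← ha]; abel
    have t2 : b3 = -b0 - b2 := by rw [← sub_eq_zero, ← hb]; abel
    have s1 := h0.iso ha0 hb0
    have s2 := h2.iso ha2 hb2
    subst t1 t2
    simp [B4_apply, B3_apply, C, f, halt, s1, s2, skew halt b0 a0, skew halt b2 a2,
      skew halt b0 a2, skew halt b2 b0]
    try ring
  · rintro ⟨x0, x1, x2, x3⟩
    rw [hrange, Submodule.mem_inf]
    refine and_congr_right ?_
    rintro ⟨hx0, hx1, hx2, hx3, hx⟩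
    simp only at *
    have t : x3 = -x0 - x1 - x2 := by rw [← sub_eq_zero, ← hx]; abel
    have hv : ∀ c ∈ L0 ⊓ L2, B4 σ (x0, x1, x2, x3) (q c) = -2 * σ c x1 := by
      rintro c ⟨hc0, hc2⟩
      have s1 := h0.iso hc0 hx0
      have s2 := h2.iso hc2 hx2
      rw [t]
      simp [B4_apply, q, s1, s2]
      try ring
    rw [← o02]
    constructor
    · rintro h _ ⟨c, hc, rfl⟩
      rw [hv c hc, show σ c x1 = 0 from h c hc, mul_zero]
    · intro h c hc
      have := h _ (Submodule.mem_map_of_mem hc)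
      rw [hv c hc] at this
      show σ c x1 = 0
      linarith

end spec

/-- the coboundary (defect of the cocycle property) formula for the
negative Maslov index of four Lagrangian subspaces. -/
theorem maslov_cocycle_defect {E : Type*} [AddCommGroup E] [Module ℝ E]
    [FiniteDimensional ℝ E] (σ : LinearMap.BilinForm ℝ E)
    (halt : ∀ v, σ v v = 0) (hnd : LinearMap.BilinForm.Nondegenerate σ)
    (L0 L1 L2 L3 : Submodule ℝ E)
    (h0 : IsLagrangian σ L0) (h1 : IsLagrangian σ L1)
    (h2 : IsLagrangian σ L2) (h3 : IsLagrangian σ L3) :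
    -(maslovIndex σ L1 L2 L3 : ℤ) + (maslovIndex σ L0 L2 L3 : ℤ)
      - (maslovIndex σ L0 L1 L3 : ℤ) + (maslovIndex σ L0 L1 L2 : ℤ)
    = (Module.finrank ℝ ↥(L1 ⊓ L3) : ℤ) - (Module.finrank ℝ ↥(L0 ⊓ L2) : ℤ)
      - (Module.finrank ℝ ↥(L1 ⊓ L2 ⊓ L3) : ℤ) + (Module.finrank ℝ ↥(L0 ⊓ L2 ⊓ L3) : ℤ)
      - (Module.finrank ℝ ↥(L0 ⊓ L1 ⊓ L3) : ℤ) + (Module.finrank ℝ ↥(L0 ⊓ L1 ⊓ L2) : ℤ) := by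
  obtain ⟨a, ha⟩ := HasNeg.exists (B3_symm σ) (T3 L0 L1 L2)
  obtain ⟨b, hb⟩ := HasNeg.exists (B3_symm σ) (T3 L0 L2 L3)
  obtain ⟨c, hc⟩ := HasNeg.exists (B3_symm σ) (T3 L1 L2 L3)
  obtain ⟨d, hd⟩ := HasNeg.exists (B3_symm σ) (T3 L0 L1 L3)
  have hd' := cyc3 halt (cyc3 halt hd)
  obtain ⟨r, hr, er⟩ := glue halt hnd h0 h1 h2 h3 ha hb
  obtain ⟨s, hs, es⟩ := glue halt hnd h1 h2 h3 h0 hc hd'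
  have hk := hr.unique (cyc4 halt hs)
  rw [maslov_eq halt h0 h2 ha, maslov_eq halt h0 h3 hb, maslov_eq halt h1 h3 hc,
    maslov_eq halt h0 h3 hd]
  have e1 : L1 ⊓ L3 ⊓ L0 = L0 ⊓ L1 ⊓ L3 := by ac_rfl
  have e2 : L1 ⊓ L2 ⊓ L3 ⊓ L0 = L0 ⊓ L1 ⊓ L2 ⊓ L3 := by ac_rfl
  rw [e1, e2] at es
  omega
end

section
/- The negative Maslov index is invariant under cyclic permutations: for any three Lagrangian subspaces L0, L1, L2 of a finite-dimensional real symplectic vector space (Σ, σ), one has i(L0,L1,L2) = i(L1,L2,L0) = i(L2,L0,L1). -/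
lemma maslov_aux {E : Type*} [AddCommGroup E] [Module ℝ E]
    (σ : LinearMap.BilinForm ℝ E) (halt : ∀ v, σ v v = 0)
    (L0 L1 L2 : Submodule ℝ E)
    (h0 : IsLagrangian σ L0) (h1 : IsLagrangian σ L1) (d : ℕ)
    (h : ∃ W : Submodule ℝ E, W ≤ L1 ⊓ (L0 ⊔ L2) ∧
      (∀ v ∈ W, v ≠ 0 → ∀ l0 ∈ L0, ∀ l2 ∈ L2, v = l0 + l2 → σ l0 l2 < 0) ∧
      Module.finrank ℝ ↥W = d) :
    ∃ W : Submodule ℝ E, W ≤ L2 ⊓ (L1 ⊔ L0) ∧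
      (∀ v ∈ W, v ≠ 0 → ∀ l0 ∈ L1, ∀ l2 ∈ L0, v = l0 + l2 → σ l0 l2 < 0) ∧
      Module.finrank ℝ ↥W = d := by
  have iso0 : ∀ a ∈ L0, ∀ b ∈ L0, σ a b = 0 := by
    intro a ha b hb
    rw [h0] at ha
    exact ha b hb
  have iso1 : ∀ a ∈ L1, ∀ b ∈ L1, σ a b = 0 := by
    intro a ha b hb
    rw [h1] at ha
    exact ha b hb
  have skew : ∀ a b, σ a b = - σ b a := by
    intro a b
    have := halt (a + b)
    simp only [map_add, LinearMap.add_apply, halt] at this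
    linarith
  obtain ⟨W, hW, hneg, hd⟩ := h
  let f : (L0 × L2) →ₗ[ℝ] E := L0.subtype.coprod L2.subtype
  have hf : LinearMap.range f = L0 ⊔ L2 := by
    simp [f, LinearMap.range_coprod]
  obtain ⟨g, hg⟩ := f.rangeRestrict.exists_rightInverse_of_surjective f.range_rangeRestrict
  have hWr : W ≤ LinearMap.range f := hf ▸ hW.trans inf_le_right
  let G : W →ₗ[ℝ] (L0 × L2) := g ∘ₗ Submodule.inclusion hWr
  have hG : ∀ w : W, (w : E) = ((G w).1 : E) + ((G w).2 : E) := by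
    intro w
    have := congrArg Subtype.val (LinearMap.congr_fun hg (Submodule.inclusion hWr w))
    exact this.symm
  let t : W →ₗ[ℝ] E := L2.subtype ∘ₗ LinearMap.snd ℝ L0 L2 ∘ₗ G
  have ht : ∀ w, t w = ((G w).2 : E) := fun w => rfl
  have hinj : Function.Injective t := by
    rw [← LinearMap.ker_eq_bot, LinearMap.ker_eq_bot']
    intro w hw
    by_contra hne
    have := hneg w w.2 (by simpa using hne) _ (G w).1.2 _ (G w).2.2 (hG w)
    rw [← ht, hw] at this
    simp at this
  refine ⟨LinearMap.range t, ?_, ?_, ?_⟩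
  · rintro _ ⟨w, rfl⟩
    refine ⟨(G w).2.2, ?_⟩
    have e : t w = (w : E) + -((G w).1 : E) := by rw [ht, hG w]; abel
    rw [e]
    exact Submodule.add_mem_sup (hW w.2).1 (L0.neg_mem (G w).1.2)
  · rintro _ ⟨w, rfl⟩ hne a ha b hb hab
    have hw0 : (w : E) ≠ 0 := by
      intro h
      apply hne
      have : w = 0 := by ext; exact h
      rw [this, map_zero]
    have key := hneg w w.2 hw0 _ (G w).1.2 _ (G w).2.2 (hG w)
    have hGw := hG w
    rw [ht] at hab
    have hw1 : (w : E) ∈ L1 := (hW w.2).1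
    have hs := (G w).1.2
    generalize ((G w).1 : E) = s at *
    generalize ((G w).2 : E) = u at *
    generalize (w : E) = x at *
    subst hab
    have e1 : σ s b = 0 := iso0 _ hs _ hb
    have e2 : σ a x = 0 := iso1 _ ha _ hw1
    rw [hGw] at e2
    simp only [map_add, halt] at e2 key
    have := skew a s
    linarith
  · rw [LinearMap.finrank_range_of_inj hinj, hd]

lemma maslov_step {E : Type*} [AddCommGroup E] [Module ℝ E]
    (σ : LinearMap.BilinForm ℝ E) (halt : ∀ v, σ v v = 0)
    (L0 L1 L2 : Submodule ℝ E)
    (h0 : IsLagrangian σ L0) (h1 : IsLagrangian σ L1) (h2 : IsLagrangian σ L2) :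
    maslovIndex σ L0 L1 L2 = maslovIndex σ L1 L2 L0 := by
  unfold maslovIndex
  congr 1
  ext d
  constructor
  · exact maslov_aux σ halt L0 L1 L2 h0 h1 d
  · intro h
    exact maslov_aux σ halt L2 L0 L1 h2 h0 d (maslov_aux σ halt L1 L2 L0 h1 h2 d h)

/-- the negative Maslov index is invariant under cyclic permutations of the
three Lagrangian subspaces. -/
theorem maslov_cyclic_invariance {E : Type*} [AddCommGroup E] [Module ℝ E]
    [FiniteDimensional ℝ E] (σ : LinearMap.BilinForm ℝ E)
    (halt : ∀ v, σ v v = 0) (hnd : LinearMap.BilinForm.Nondegenerate σ)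
    (L0 L1 L2 : Submodule ℝ E)
    (h0 : IsLagrangian σ L0) (h1 : IsLagrangian σ L1) (h2 : IsLagrangian σ L2) :
    maslovIndex σ L0 L1 L2 = maslovIndex σ L1 L2 L0 ∧
    maslovIndex σ L1 L2 L0 = maslovIndex σ L2 L0 L1 := by
  exact ⟨maslov_step σ halt L0 L1 L2 h0 h1 h2, maslov_step σ halt L1 L2 L0 h1 h2 h0⟩
end

section
/- Symplectic reduction of the Maslov index: let L0, L1, L2 be Lagrangian subspaces of a finite-dimensional real symplectic vector space (Σ, σ) and let V ⊆ L0 ∩ L2 be a subspace (necessarily isotropic, since it lies in a Lagrangian subspace). Then the quotient V^⊥/V carries a well-defined induced symplectic form; for every Lagrangian subspace L of Σ the subspace L^V := ((L ∩ V^⊥) + V)/V is a Lagrangian subspace of V^⊥/V; and the negative Maslov indices satisfy i(L0, L1, L2) = i(L0^V, L1^V, L2^V). -/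
/-- The symplectic reduction of a subspace `L` by an isotropic subspace `V`:
`L^V = ((L ∩ V^⊥) + V) / V`, viewed as a subspace of the quotient `V^⊥ / V`. -/
noncomputable def sympReduce {E : Type*} [AddCommGroup E] [Module ℝ E]
    (σ : LinearMap.BilinForm ℝ E) (V : Submodule ℝ E) (L : Submodule ℝ E) :
    Submodule ℝ (↥(sympOrth σ V) ⧸ Submodule.comap (sympOrth σ V).subtype V) :=
  Submodule.map (Submodule.comap (sympOrth σ V).subtype V).mkQ
    (Submodule.comap (sympOrth σ V).subtype ((L ⊓ sympOrth σ V) ⊔ V))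

theorem mem_sympOrth {E : Type*} [AddCommGroup E] [Module ℝ E]
    (σ : LinearMap.BilinForm ℝ E) (W : Submodule ℝ E) (u : E) :
    u ∈ sympOrth σ W ↔ ∀ w ∈ W, σ u w = 0 := Iff.rfl

theorem mem_sympReduce {E : Type*} [AddCommGroup E] [Module ℝ E]
    (σ : LinearMap.BilinForm ℝ E) (V L : Submodule ℝ E)
    (z : ↥(sympOrth σ V) ⧸ Submodule.comap (sympOrth σ V).subtype V) :
    z ∈ sympReduce σ V L ↔ ∃ x : ↥(sympOrth σ V), (x : E) ∈ L ∧
      (Submodule.comap (sympOrth σ V).subtype V).mkQ x = z := by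
  unfold sympReduce
  rw [Submodule.mem_map]
  constructor
  · rintro ⟨x, hx, rfl⟩
    rw [Submodule.mem_comap, Submodule.mem_sup] at hx
    obtain ⟨l, hl, v, hv, h⟩ := hx
    refine ⟨⟨l, hl.2⟩, hl.1, ?_⟩
    rw [← sub_eq_zero, ← map_sub, Submodule.mkQ_apply, Submodule.Quotient.mk_eq_zero,
      Submodule.mem_comap]
    have : (sympOrth σ V).subtype (⟨l, hl.2⟩ - x) = -v := by
      simp only [map_sub, ← h]
      simp
    rw [this]
    exact V.neg_mem hv
  · rintro ⟨x, hx, rfl⟩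
    exact ⟨x, Submodule.mem_sup_left ⟨hx, x.2⟩, rfl⟩

theorem sympOrth_sympOrth {E : Type*} [AddCommGroup E] [Module ℝ E]
    [FiniteDimensional ℝ E] (σ : LinearMap.BilinForm ℝ E)
    (halt : ∀ v, σ v v = 0) (hnd : LinearMap.BilinForm.Nondegenerate σ)
    (W : Submodule ℝ E) : sympOrth σ (sympOrth σ W) = W := by
  have hA : σ.IsAlt := halt
  have key : ∀ U, sympOrth σ U = σ.orthogonal U := by
    intro U
    ext u
    rw [mem_sympOrth, LinearMap.BilinForm.mem_orthogonal_iff]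
    exact ⟨fun h n hn => hA.isRefl _ _ (h n hn), fun h n hn => hA.isRefl _ _ (h n hn)⟩
  rw [key, key]
  exact LinearMap.BilinForm.orthogonal_orthogonal hnd hA.isRefl W

/-- symplectic reduction of the Maslov index.  If `V ⊆ L0 ∩ L2` then the
quotient `V^⊥/V` carries a well-defined induced symplectic form, reductions of Lagrangian
subspaces are Lagrangian, and the negative Maslov index is preserved:
`i(L0,L1,L2) = i(L0^V, L1^V, L2^V)`. -/
theorem maslov_symplectic_reduction {E : Type*} [AddCommGroup E] [Module ℝ E]
    [FiniteDimensional ℝ E] (σ : LinearMap.BilinForm ℝ E)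
    (halt : ∀ v, σ v v = 0) (hnd : LinearMap.BilinForm.Nondegenerate σ)
    (L0 L1 L2 : Submodule ℝ E)
    (h0 : IsLagrangian σ L0) (h1 : IsLagrangian σ L1) (h2 : IsLagrangian σ L2)
    (V : Submodule ℝ E) (hV : V ≤ L0 ⊓ L2) :
    ∃ σ' : LinearMap.BilinForm ℝ
        (↥(sympOrth σ V) ⧸ Submodule.comap (sympOrth σ V).subtype V),
      (∀ z, σ' z z = 0) ∧ LinearMap.BilinForm.Nondegenerate σ' ∧
      (∀ x y : ↥(sympOrth σ V),
        σ' ((Submodule.comap (sympOrth σ V).subtype V).mkQ x)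
           ((Submodule.comap (sympOrth σ V).subtype V).mkQ y) = σ (x : E) (y : E)) ∧
      (∀ L : Submodule ℝ E, IsLagrangian σ L → IsLagrangian σ' (sympReduce σ V L)) ∧
      maslovIndex σ L0 L1 L2
        = maslovIndex σ' (sympReduce σ V L0) (sympReduce σ V L1) (sympReduce σ V L2) := by
  have hA : σ.IsAlt := halt
  have hsw : ∀ x y, σ x y = 0 → σ y x = 0 := fun x y h => hA.isRefl _ _ h
  have iso : ∀ L, IsLagrangian σ L → ∀ x ∈ L, ∀ y ∈ L, σ x y = 0 := by
    intro L hL x hx y hy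
    have hx' : x ∈ sympOrth σ L := hL ▸ hx
    exact hx' y hy
  have hL0 : L0 ≤ sympOrth σ V := fun x hx v hv => iso L0 h0 x hx v (hV hv).1
  have hL2 : L2 ≤ sympOrth σ V := fun x hx v hv => iso L2 h2 x hx v (hV hv).2
  have hVV : V ≤ sympOrth σ V := fun x hx => hL0 (hV hx).1
  have dbl := sympOrth_sympOrth σ halt hnd
  set K := Submodule.comap (sympOrth σ V).subtype V with hK
  have hker : ∀ x : ↥(sympOrth σ V), K.mkQ x = 0 ↔ (x : E) ∈ V := by
    intro x
    rw [Submodule.mkQ_apply, Submodule.Quotient.mk_eq_zero, hK, Submodule.mem_comap]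
    rfl
  have hK1 : K ≤ LinearMap.ker (σ.domRestrict₁₂ (sympOrth σ V) (sympOrth σ V)) := by
    intro x hx
    rw [LinearMap.mem_ker]
    ext y
    exact hsw _ _ (y.2 _ hx)
  have hK2 : K ≤ LinearMap.ker (σ.domRestrict₁₂ (sympOrth σ V) (sympOrth σ V)).flip := by
    intro x hx
    rw [LinearMap.mem_ker]
    ext y
    exact y.2 _ hx
  obtain ⟨σ', hσ'⟩ : ∃ σ' : LinearMap.BilinForm ℝ (↥(sympOrth σ V) ⧸ K),
      ∀ x y : ↥(sympOrth σ V), σ' (K.mkQ x) (K.mkQ y) = σ (x : E) (y : E) :=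
    ⟨LinearMap.liftQ₂ K K (σ.domRestrict₁₂ (sympOrth σ V) (sympOrth σ V)) hK1 hK2,
      fun x y => rfl⟩
  have halt' : ∀ z, σ' z z = 0 := by
    intro z
    obtain ⟨x, rfl⟩ := K.mkQ_surjective z
    rw [hσ']
    exact halt _
  have hA' : σ'.IsAlt := halt'
  have hmr := fun L => mem_sympReduce σ V L
  refine ⟨σ', halt', ?_, hσ', ?_, ?_⟩
  · have hl : LinearMap.SeparatingLeft σ' := by
      intro z hz
      obtain ⟨x, rfl⟩ := K.mkQ_surjective z
      rw [hker]
      refine (dbl V).le ?_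
      intro y hy
      rw [← hσ' x ⟨y, hy⟩]
      exact hz _
    refine ⟨hl, fun z hz => hl z fun y => ?_⟩
    exact hA'.isRefl _ _ (hz y)
  · intro L hL
    unfold IsLagrangian
    ext z
    rw [hmr, mem_sympOrth]
    constructor
    · rintro ⟨x, hx, rfl⟩ w hw
      obtain ⟨y, hy, rfl⟩ := (hmr L w).1 hw
      rw [hσ']
      exact iso L hL _ hx _ hy
    · intro hz
      obtain ⟨x, rfl⟩ := K.mkQ_surjective z
      have hx : (x : E) ∈ L ⊔ V := by
        rw [← dbl (L ⊔ V)]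
        intro y hy
        have hyL : y ∈ L := by
          rw [hL]
          exact fun w hw => hy w (Submodule.mem_sup_left hw)
        have hyV : y ∈ sympOrth σ V := fun w hw => hy w (Submodule.mem_sup_right hw)
        rw [← hσ' x ⟨y, hyV⟩]
        exact hz _ ((hmr L _).2 ⟨⟨y, hyV⟩, hyL, rfl⟩)
      obtain ⟨l, hl, v, hv, h⟩ := Submodule.mem_sup.1 hx
      have hle : l = (x : E) - v := by rw [← h]; abel
      have hlo : l ∈ sympOrth σ V := by
        rw [hle]
        exact Submodule.sub_mem _ x.2 (hVV hv)
      refine ⟨⟨l, hlo⟩, hl, ?_⟩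
      rw [← sub_eq_zero, ← map_sub, hker]
      have : ((⟨l, hlo⟩ - x : ↥(sympOrth σ V)) : E) = -v := by
        simp [hle]
      rw [this]
      exact V.neg_mem hv
  · unfold maslovIndex
    congr 1
    ext d
    constructor
    · rintro ⟨W, hW, hneg, rfl⟩
      have hWo : W ≤ sympOrth σ V := fun w hw => (sup_le hL0 hL2) (hW hw).2
      let f : ↥W →ₗ[ℝ] (↥(sympOrth σ V) ⧸ K) := K.mkQ ∘ₗ Submodule.inclusion hWo
      have hfv : ∀ w : ↥W, f w = K.mkQ ⟨w, hWo w.2⟩ := fun w => rfl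
      have hf : Function.Injective f := by
        rw [injective_iff_map_eq_zero]
        intro w hw
        rw [hfv, hker] at hw
        by_contra hne
        have hne' : (w : E) ≠ 0 := fun h => hne (Subtype.ext h)
        have := hneg w w.2 hne' w (hV hw).1 0 L2.zero_mem (by simp)
        simp at this
      refine ⟨LinearMap.range f, ?_, ?_, LinearMap.finrank_range_of_inj hf⟩
      · rintro _ ⟨w, rfl⟩
        rw [hfv]
        refine ⟨(hmr L1 _).2 ⟨_, (hW w.2).1, rfl⟩, ?_⟩
        obtain ⟨a, ha, b, hb, hab⟩ := Submodule.mem_sup.1 (hW w.2).2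
        refine Submodule.mem_sup.2 ⟨K.mkQ ⟨a, hL0 ha⟩, (hmr L0 _).2 ⟨_, ha, rfl⟩,
          K.mkQ ⟨b, hL2 hb⟩, (hmr L2 _).2 ⟨_, hb, rfl⟩, ?_⟩
        rw [← map_add]
        congr 1
        exact Subtype.ext hab
      · rintro _ ⟨w, rfl⟩ hne l0 hl0 l2 hl2 h
        obtain ⟨a, ha, rfl⟩ := (hmr L0 _).1 hl0
        obtain ⟨b, hb, rfl⟩ := (hmr L2 _).1 hl2
        rw [hσ']
        rw [hfv, ← map_add, ← sub_eq_zero, ← map_sub, hker] at h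
        have hne' : (w : E) ≠ 0 := by
          intro h0
          apply hne
          have : w = 0 := Subtype.ext h0
          rw [this, map_zero]
        set t : E := ((⟨w, hWo w.2⟩ - (a + b) : ↥(sympOrth σ V)) : E) with ht
        have hwt : (w : E) = (a + t) + b := by
          rw [ht]
          simp only [Submodule.coe_sub, Submodule.coe_add]
          abel
        have := hneg w w.2 hne' (a + t) (L0.add_mem ha (hV h).1) b hb hwt
        have h3 : σ t b = 0 := hsw _ _ (hL2 hb t h)
        simpa [h3] using this
    · rintro ⟨W, hW, hneg, rfl⟩
      let N : Submodule ℝ ↥(sympOrth σ V) :=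
        Submodule.comap K.mkQ W ⊓ Submodule.comap (sympOrth σ V).subtype L1
      let g : ↥N →ₗ[ℝ] ↥W := (K.mkQ.domRestrict N).codRestrict W (fun x => x.2.1)
      have hg : Function.Surjective g := by
        rintro ⟨z, hz⟩
        obtain ⟨x, hx, rfl⟩ := (hmr L1 z).1 (hW hz).1
        exact ⟨⟨x, hz, hx⟩, rfl⟩
      obtain ⟨r, hr⟩ := g.exists_rightInverse_of_surjective (LinearMap.range_eq_top.2 hg)
      have hr' : ∀ w : ↥W, K.mkQ (r w : ↥(sympOrth σ V)) = w := fun w =>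
        congrArg Subtype.val (LinearMap.congr_fun hr w)
      let f : ↥W →ₗ[ℝ] E := (sympOrth σ V).subtype ∘ₗ N.subtype ∘ₗ r
      have hfv : ∀ w : ↥W, f w = ((r w : ↥(sympOrth σ V)) : E) := fun w => rfl
      have hf : Function.Injective f := by
        intro a b hab
        rw [hfv, hfv] at hab
        apply Subtype.ext
        rw [← hr' a, ← hr' b, Subtype.ext hab]
      refine ⟨LinearMap.range f, ?_, ?_, LinearMap.finrank_range_of_inj hf⟩
      · rintro _ ⟨w, rfl⟩
        refine ⟨(r w).2.2, ?_⟩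
        obtain ⟨l0, hl0, l2, hl2, h⟩ := Submodule.mem_sup.1 (hW w.2).2
        obtain ⟨a, ha, rfl⟩ := (hmr L0 _).1 hl0
        obtain ⟨b, hb, rfl⟩ := (hmr L2 _).1 hl2
        rw [← hr' w, ← map_add, eq_comm, ← sub_eq_zero, ← map_sub, hker] at h
        rw [hfv]
        refine Submodule.mem_sup.2 ⟨_, L0.add_mem ha (hV h).1, b, hb, ?_⟩
        simp only [Submodule.coe_sub, Submodule.coe_add]
        abel
      · rintro _ ⟨w, rfl⟩ hne a ha b hb h
        rw [← hσ' ⟨a, hL0 ha⟩ ⟨b, hL2 hb⟩]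
        refine hneg w w.2 ?_ _ ((hmr L0 _).2 ⟨_, ha, rfl⟩) _ ((hmr L2 _).2 ⟨_, hb, rfl⟩) ?_
        · intro h0
          apply hne
          have : w = 0 := Subtype.ext h0
          rw [this, map_zero]
        · rw [← hr' w, ← map_add]
          congr 1
          exact Subtype.ext h
end

section
/- Let σ be the standard symplectic form on ℝ^{2n} and σ_ℂ(X,Y) = σ(X̄,Y) its sesquilinear extension to ℂ^{2n}. Let L0, L1, L2 be complex Lagrangian subspaces of (ℂ^{2n}, σ_ℂ). Then the Maslov form m on L1 ∩ (L0 + L2), defined by m(l1) = σ_ℂ(l0, l2) for any decomposition l1 = l0 + l2 with lᵢ ∈ Lᵢ, is a Hermitian form: for every l1 ∈ L1 ∩ (L0 + L2) one has conj(m(l1)) = m(l1), i.e. m(l1) is a real number. -/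
open scoped ComplexOrder

noncomputable section

/-- `ℂ^{2n}`, written with coordinates indexed by `Fin n ⊕ Fin n`
(first block = `q`-coordinates, second block = `p`-coordinates). -/
abbrev CV (n : ℕ) := (Fin n ⊕ Fin n) → ℂ

/-- The sesquilinear extension `σ_ℂ(X,Y) = σ(X̄,Y)` of the standard symplectic form
`σ(x,y) = ⟨Jx,y⟩`, `J = [[0,−I],[I,0]]`, to `ℂ^{2n}` (conjugate-linear in the first
argument). -/
def sigmaC (n : ℕ) : CV n →ₛₗ[starRingEnd ℂ] CV n →ₗ[ℂ] ℂ :=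
  LinearMap.mk₂'ₛₗ (starRingEnd ℂ) (RingHom.id ℂ)
    (fun x y => (∑ i : Fin n, (starRingEnd ℂ) (x (Sum.inl i)) * y (Sum.inr i)) -
      ∑ i : Fin n, (starRingEnd ℂ) (x (Sum.inr i)) * y (Sum.inl i))
    (by intro x x' y; simp [add_mul, Finset.sum_add_distrib]; ring)
    (by
      intro c x y
      simp only [Pi.smul_apply, smul_eq_mul, map_mul]
      rw [mul_sub, Finset.mul_sum, Finset.mul_sum]
      congr 1 <;> exact Finset.sum_congr rfl (by intros; ring))
    (by intro x y y'; simp [mul_add, Finset.sum_add_distrib]; ring)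
    (by
      intro c x y
      simp only [Pi.smul_apply, smul_eq_mul, RingHom.id_apply]
      rw [mul_sub, Finset.mul_sum, Finset.mul_sum]
      congr 1 <;> exact Finset.sum_congr rfl (by intros; ring))

/-- The orthogonal of a subspace with respect to a sesquilinear form. -/
def sesqOrth {W : Type*} [AddCommGroup W] [Module ℂ W]
    (f : W →ₛₗ[starRingEnd ℂ] W →ₗ[ℂ] ℂ) (L : Submodule ℂ W) : Submodule ℂ W where
  carrier := {u | ∀ w ∈ L, f u w = 0}
  add_mem' := by
    intro a b ha hb w hw
    simp [map_add, ha w hw, hb w hw]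
  zero_mem' := by
    intro w hw
    simp
  smul_mem' := by
    intro c u hu w hw
    simp [LinearMap.map_smulₛₗ, hu w hw]

/-- A complex subspace is Lagrangian for a sesquilinear form when it coincides with its
orthogonal. -/
def IsLagrangianC {W : Type*} [AddCommGroup W] [Module ℂ W]
    (f : W →ₛₗ[starRingEnd ℂ] W →ₗ[ℂ] ℂ) (L : Submodule ℂ W) : Prop :=
  L = sesqOrth f L

/-- Negative inertia index of the (Hermitian) Maslov form of a triple of complex
Lagrangian subspaces: the supremum of complex dimensions of subspaces of
`L1 ∩ (L0 + L2)` on which `m(l1) = σ_ℂ(l0,l2)` is negative definite (negativity in the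
complex order: real and `< 0`). -/
def maslovIndexC {W : Type*} [AddCommGroup W] [Module ℂ W]
    (f : W →ₛₗ[starRingEnd ℂ] W →ₗ[ℂ] ℂ) (L0 L1 L2 : Submodule ℂ W) : ℕ :=
  sSup {d : ℕ | ∃ S : Submodule ℂ W, S ≤ L1 ⊓ (L0 ⊔ L2) ∧
    (∀ v ∈ S, v ≠ 0 → ∀ l0 ∈ L0, ∀ l2 ∈ L2, v = l0 + l2 → f l0 l2 < 0) ∧
    Module.finrank ℂ ↥S = d}


/-- the Maslov form of a triple of complex Lagrangian subspaces of
`(ℂ^{2n}, σ_ℂ)` is Hermitian: each of its values `m(l1) = σ_ℂ(l0,l2)` is fixed by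
complex conjugation, i.e. it is a real number. -/
theorem maslov_form_is_hermitian {n : ℕ} (L0 L1 L2 : Submodule ℂ (CV n))
    (h0 : IsLagrangianC (sigmaC n) L0) (h1 : IsLagrangianC (sigmaC n) L1)
    (h2 : IsLagrangianC (sigmaC n) L2) :
    ∀ l1 ∈ L1, ∀ l0 ∈ L0, ∀ l2 ∈ L2, l1 = l0 + l2 →
      (starRingEnd ℂ) (sigmaC n l0 l2) = sigmaC n l0 l2 := by
  intro l1 hl1 l0 hl0 l2 hl2 h
  have iso : ∀ L : Submodule ℂ (CV n), IsLagrangianC (sigmaC n) L →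
      ∀ x ∈ L, sigmaC n x x = 0 := by
    intro L hL x hx
    have hx' : x ∈ sesqOrth (sigmaC n) L := hL ▸ hx
    exact hx' x hx
  have e1 := iso L1 h1 l1 hl1
  have e0 := iso L0 h0 l0 hl0
  have e2 := iso L2 h2 l2 hl2
  have skew : (starRingEnd ℂ) (sigmaC n l0 l2) = - sigmaC n l2 l0 := by
    simp only [sigmaC, LinearMap.mk₂'ₛₗ_apply, map_sub, map_sum, map_mul, Complex.conj_conj,
      neg_sub]
    congr 1 <;> exact Finset.sum_congr rfl (by intros; ring)
  rw [h] at e1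
  simp only [map_add, LinearMap.add_apply, e0, e2] at e1
  rw [skew]
  linear_combination -e1

end
end

section
/- On ℂⁿ × ℂⁿ consider the sesquilinear form ω((x1,x2),(y1,y2)) = i⟨x1,y1⟩ − i⟨x2,y2⟩, where ⟨a,b⟩ = Σ āᵢbᵢ is the standard Hermitian inner product (conjugate-linear in the first argument). A complex subspace L ⊆ ℂⁿ × ℂⁿ is Lagrangian for ω (i.e. L equals its ω-orthogonal) if and only if L is the graph {(x, Rx) : x ∈ ℂⁿ} of a unitary operator R : ℂⁿ → ℂⁿ. In particular, the graph of a linear map R is Lagrangian if and only if R is unitary, and every Lagrangian subspace is transversal to both factors ℂⁿ × {0} and {0} × ℂⁿ. -/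
noncomputable section

/-- The standard Hermitian inner product on `ℂⁿ`, conjugate-linear in the first
argument: `⟨a,b⟩ = Σ āᵢ bᵢ`. -/
def hermInner {n : ℕ} (a b : Fin n → ℂ) : ℂ := ∑ i, (starRingEnd ℂ) (a i) * b i

lemma hermInner_add_left {n : ℕ} (a a' b : Fin n → ℂ) :
    hermInner (a + a') b = hermInner a b + hermInner a' b := by
  simp [hermInner, add_mul, Finset.sum_add_distrib]

lemma hermInner_add_right {n : ℕ} (a b b' : Fin n → ℂ) :
    hermInner a (b + b') = hermInner a b + hermInner a b' := by
  simp [hermInner, mul_add, Finset.sum_add_distrib]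

lemma hermInner_smul_left {n : ℕ} (c : ℂ) (a b : Fin n → ℂ) :
    hermInner (c • a) b = (starRingEnd ℂ) c * hermInner a b := by
  simp only [hermInner, Pi.smul_apply, smul_eq_mul, map_mul, Finset.mul_sum]
  exact Finset.sum_congr rfl (by intros; ring)

lemma hermInner_smul_right {n : ℕ} (c : ℂ) (a b : Fin n → ℂ) :
    hermInner a (c • b) = c * hermInner a b := by
  simp only [hermInner, Pi.smul_apply, smul_eq_mul, Finset.mul_sum]
  exact Finset.sum_congr rfl (by intros; ring)

/-- The sesquilinear form `ω((x1,x2),(y1,y2)) = i⟨x1,y1⟩ − i⟨x2,y2⟩` on `ℂⁿ × ℂⁿ`. -/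
def omegaForm (n : ℕ) :
    ((Fin n → ℂ) × (Fin n → ℂ)) →ₛₗ[starRingEnd ℂ] ((Fin n → ℂ) × (Fin n → ℂ)) →ₗ[ℂ] ℂ :=
  LinearMap.mk₂'ₛₗ (starRingEnd ℂ) (RingHom.id ℂ)
    (fun x y => Complex.I * hermInner x.1 y.1 - Complex.I * hermInner x.2 y.2)
    (by intro x x' y; simp [hermInner_add_left]; ring)
    (by intro c x y; simp [hermInner_smul_left, smul_eq_mul]; ring)
    (by intro x y y'; simp [hermInner_add_right]; ring)
    (by intro c x y; simp [hermInner_smul_right, smul_eq_mul]; ring)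

lemma aux_self {n : ℕ} (a : Fin n → ℂ) (h : hermInner a a = 0) : a = 0 := by
  have h1 : hermInner a a = ((∑ i, Complex.normSq (a i) : ℝ) : ℂ) := by
    simp only [hermInner, Complex.ofReal_sum]
    exact Finset.sum_congr rfl fun i _ => by rw [Complex.normSq_eq_conj_mul_self]
  rw [h1, Complex.ofReal_eq_zero,
    Finset.sum_eq_zero_iff_of_nonneg (fun i _ => Complex.normSq_nonneg _)] at h
  funext i
  exact Complex.normSq_eq_zero.1 (h i (Finset.mem_univ i))

lemma aux_zero_left {n : ℕ} (b : Fin n → ℂ) : hermInner 0 b = 0 := by simp [hermInner]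

lemma aux_sub_left {n : ℕ} (a a' b : Fin n → ℂ) :
    hermInner (a - a') b = hermInner a b - hermInner a' b := by
  simp [hermInner, sub_mul, Finset.sum_sub_distrib]

lemma aux_top {n : ℕ} (S : Submodule ℂ (Fin n → ℂ))
    (h : ∀ a, (∀ w ∈ S, hermInner a w = 0) → a = 0) : S = ⊤ := by
  by_contra hS
  obtain ⟨f, hf, hSf⟩ := S.exists_le_ker_of_lt_top (lt_top_iff_ne_top.2 hS)
  have key : ∀ w, hermInner (fun i => (starRingEnd ℂ) (f (Pi.single i 1))) w = f w := by
    intro w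
    rw [LinearMap.pi_apply_eq_sum_univ f w]
    simp only [hermInner, Complex.conj_conj, smul_eq_mul]
    refine Finset.sum_congr rfl fun i _ => ?_
    rw [mul_comm]
    congr 2
    funext j
    simp [Pi.single_apply, eq_comm]
  have h0 := h _ (fun w hw => (key w).trans (hSf hw))
  apply hf
  refine LinearMap.ext fun w => ?_
  rw [← key w, h0, aux_zero_left]
  rfl

lemma aux_omega {n : ℕ} (u w : (Fin n → ℂ) × (Fin n → ℂ)) :
    omegaForm n u w = 0 ↔ hermInner u.1 w.1 = hermInner u.2 w.2 := by
  change Complex.I * hermInner u.1 w.1 - Complex.I * hermInner u.2 w.2 = 0 ↔ _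
  rw [sub_eq_zero, mul_right_inj' Complex.I_ne_zero]

lemma aux_lag {n : ℕ} (L : Submodule ℂ ((Fin n → ℂ) × (Fin n → ℂ))) :
    IsLagrangianC (omegaForm n) L ↔
      ∀ u, u ∈ L ↔ ∀ w ∈ L, hermInner u.1 w.1 = hermInner u.2 w.2 := by
  unfold IsLagrangianC
  rw [SetLike.ext_iff]
  refine forall_congr' fun u => ?_
  have : u ∈ sesqOrth (omegaForm n) L ↔ ∀ w ∈ L, omegaForm n u w = 0 := Iff.rfl
  rw [this]
  simp only [aux_omega]

lemma aux_bij {n : ℕ} (R : (Fin n → ℂ) →ₗ[ℂ] (Fin n → ℂ))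
    (h : ∀ a b, hermInner (R a) (R b) = hermInner a b) : Function.Bijective R := by
  have hi : Function.Injective R := by
    rw [← LinearMap.ker_eq_bot, LinearMap.ker_eq_bot']
    intro m hm
    apply aux_self
    rw [← h, hm, aux_zero_left]
  exact ⟨hi, LinearMap.injective_iff_surjective.1 hi⟩

lemma aux_graph {n : ℕ} (R : (Fin n → ℂ) →ₗ[ℂ] (Fin n → ℂ)) :
    IsLagrangianC (omegaForm n) (LinearMap.graph R) ↔
        ∀ a b, hermInner (R a) (R b) = hermInner a b := by
  rw [aux_lag]
  simp only [LinearMap.mem_graph_iff]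
  constructor
  · intro h a b
    exact ((h (a, R a)).1 rfl (b, R b) rfl).symm
  · intro h u
    constructor
    · intro hu w hw
      rw [hu, hw, h]
    · intro hu
      obtain ⟨b, hb⟩ := (aux_bij R h).2 (u.2 - R u.1)
      rw [← sub_eq_zero]
      apply aux_self
      nth_rewrite 2 [← hb]
      rw [aux_sub_left, h, ← hu (b, R b) rfl, sub_self]

lemma aux_exists {n : ℕ} (L : Submodule ℂ ((Fin n → ℂ) × (Fin n → ℂ)))
    (hL : IsLagrangianC (omegaForm n) L) :
    ∃ R : (Fin n → ℂ) →ₗ[ℂ] (Fin n → ℂ), L = LinearMap.graph R := by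
  rw [aux_lag] at hL
  apply Submodule.exists_eq_graph
  constructor
  · rintro ⟨u, hu⟩ ⟨v, hv⟩ huv
    have huv' : u.1 = v.1 := huv
    have hd := L.sub_mem hu hv
    have h2 := (hL _).1 hd _ hd
    have h1 : (u - v).1 = 0 := by simp [huv']
    rw [h1, aux_zero_left] at h2
    have h3 := aux_self _ h2.symm
    exact Subtype.ext (sub_eq_zero.1 (Prod.ext h1 h3))
  · have ht : L.map (LinearMap.fst ℂ _ _) = ⊤ := by
      apply aux_top
      intro a ha
      have hm : ((a, 0) : (Fin n → ℂ) × (Fin n → ℂ)) ∈ L := by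
        rw [hL]
        intro w hw
        rw [aux_zero_left]
        exact ha _ ⟨w, hw, rfl⟩
      have h2 := (hL _).1 hm _ hm
      rw [aux_zero_left] at h2
      exact aux_self _ h2
    intro x
    have hx : x ∈ L.map (LinearMap.fst ℂ _ _) := ht ▸ Submodule.mem_top
    obtain ⟨w, hw, rfl⟩ := hx
    exact ⟨⟨w, hw⟩, rfl⟩

/-- a complex subspace of `ℂⁿ × ℂⁿ` is Lagrangian for
`ω((x1,x2),(y1,y2)) = i⟨x1,y1⟩ − i⟨x2,y2⟩` iff it is the graph of a unitary operator;
in particular the graph of a linear map is Lagrangian iff the map is unitary, and every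
Lagrangian subspace is transversal to both factors `ℂⁿ × {0}` and `{0} × ℂⁿ`. -/
theorem lagrangian_iff_graph_of_unitary (n : ℕ) :
    (∀ L : Submodule ℂ ((Fin n → ℂ) × (Fin n → ℂ)),
      IsLagrangianC (omegaForm n) L ↔
        ∃ R : (Fin n → ℂ) →ₗ[ℂ] (Fin n → ℂ),
          (∀ a b, hermInner (R a) (R b) = hermInner a b) ∧ L = LinearMap.graph R) ∧
    (∀ R : (Fin n → ℂ) →ₗ[ℂ] (Fin n → ℂ),
      IsLagrangianC (omegaForm n) (LinearMap.graph R) ↔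
        ∀ a b, hermInner (R a) (R b) = hermInner a b) ∧
    (∀ L : Submodule ℂ ((Fin n → ℂ) × (Fin n → ℂ)), IsLagrangianC (omegaForm n) L →
      IsCompl L ((⊤ : Submodule ℂ (Fin n → ℂ)).prod (⊥ : Submodule ℂ (Fin n → ℂ))) ∧
      IsCompl L ((⊥ : Submodule ℂ (Fin n → ℂ)).prod (⊤ : Submodule ℂ (Fin n → ℂ)))) := by
  refine ⟨fun L => ⟨fun hL => ?_, ?_⟩, aux_graph, fun L hL => ?_⟩
  · obtain ⟨R, rfl⟩ := aux_exists L hL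
    exact ⟨R, (aux_graph R).1 hL, rfl⟩
  · rintro ⟨R, hR, rfl⟩
    exact (aux_graph R).2 hR
  · obtain ⟨R, rfl⟩ := aux_exists L hL
    obtain ⟨hi, hs⟩ := aux_bij R ((aux_graph R).1 hL)
    constructor
    · refine ⟨Submodule.disjoint_def.2 ?_, codisjoint_iff.2 (Submodule.eq_top_iff'.2 ?_)⟩
      · rintro ⟨x, y⟩ h1 h2
        have h1' : y = R x := h1
        have h2' : y = 0 := h2.2
        have hx : x = 0 := hi (by rw [← h1', h2', map_zero])
        rw [hx, h2']
        rfl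
      · rintro ⟨x, y⟩
        obtain ⟨z, rfl⟩ := hs y
        refine Submodule.mem_sup.2 ⟨(z, R z), rfl, (x - z, 0), ⟨trivial, rfl⟩, ?_⟩
        simp
    · refine ⟨Submodule.disjoint_def.2 ?_, codisjoint_iff.2 (Submodule.eq_top_iff'.2 ?_)⟩
      · rintro ⟨x, y⟩ h1 h2
        have h1' : y = R x := h1
        have h2' : x = 0 := h2.1
        rw [h1', h2', map_zero]
        rfl
      · rintro ⟨x, y⟩
        refine Submodule.mem_sup.2 ⟨(x, R x), rfl, (0, y - R x), ⟨rfl, trivial⟩, ?_⟩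
        simp

end
end

section
/- Let Θ be a real symplectic 2n×2n matrix (ΘᵀJΘ = J) acting ℂ-linearly on ℂ^{2n}, k ≥ 1 an integer, and ω ∈ ℂ a primitive k-th root of unity. On Σ^k × Σ^k with Σ = ℂ^{2n}, equipped with the symplectic form (−σ_ℂ)^{⊕k} ⊕ σ_ℂ^{⊕k}, consider the Lagrangian subspaces Π^{2k} = Π × ⋯ × Π (2k factors), Γ = {(ξ1,…,ξk, Θξ1,…,Θξk) : ξᵢ ∈ Σ}, and Δ^↺ = {(ξ1,…,ξk, ξ2, ξ3,…,ξk, ξ1) : ξᵢ ∈ Σ} (the graph of the cyclic shift). Then the Maslov form m(Π^{2k}, Γ, Δ^↺) is linearly isometric to the direct sum ⊕_{l=0}^{k−1} m(Π², Γ(ω^lΘ), Δ); in particular the negative Maslov indices satisfy i(Π^{2k}, Γ, Δ^↺) = Σ_{l=0}^{k−1} i(Π², Γ(ω^lΘ), Δ). -/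
open scoped ComplexOrder

noncomputable section

/-- The direct sum of two sesquilinear forms on a product space. -/
def sesqProd {W1 W2 : Type*} [AddCommGroup W1] [Module ℂ W1] [AddCommGroup W2] [Module ℂ W2]
    (f : W1 →ₛₗ[starRingEnd ℂ] W1 →ₗ[ℂ] ℂ) (g : W2 →ₛₗ[starRingEnd ℂ] W2 →ₗ[ℂ] ℂ) :
    (W1 × W2) →ₛₗ[starRingEnd ℂ] (W1 × W2) →ₗ[ℂ] ℂ :=
  LinearMap.mk₂'ₛₗ (starRingEnd ℂ) (RingHom.id ℂ)
    (fun x y => f x.1 y.1 + g x.2 y.2)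
    (by intro x x' y; simp [map_add]; ring)
    (by intro c x y; simp [LinearMap.map_smulₛₗ, smul_eq_mul, mul_add])
    (by intro x y y'; simp [map_add]; ring)
    (by intro c x y; simp [smul_eq_mul, mul_add])

/-- The direct sum of `k` copies of a sesquilinear form. -/
def sesqPi {W : Type*} [AddCommGroup W] [Module ℂ W] (k : ℕ)
    (f : W →ₛₗ[starRingEnd ℂ] W →ₗ[ℂ] ℂ) :
    (Fin k → W) →ₛₗ[starRingEnd ℂ] (Fin k → W) →ₗ[ℂ] ℂ :=
  LinearMap.mk₂'ₛₗ (starRingEnd ℂ) (RingHom.id ℂ)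
    (fun x y => ∑ i, f (x i) (y i))
    (by intro x x' y; simp [map_add, Finset.sum_add_distrib])
    (by intro c x y; simp [LinearMap.map_smulₛₗ, Finset.mul_sum])
    (by intro x y y'; simp [map_add, Finset.sum_add_distrib])
    (by intro c x y; simp [Finset.mul_sum])

/-- The vertical Lagrangian subspace `Π = {(p,0)} ⊂ ℂ^{2n}`. -/
def PiV (n : ℕ) : Submodule ℂ (CV n) where
  carrier := {x | ∀ i, x (Sum.inr i) = 0}
  add_mem' := by intro a b ha hb i; simp [ha i, hb i]
  zero_mem' := by intro i; simp
  smul_mem' := by intro c x hx i; simp [hx i]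

/-- The standard symplectic matrix `J = [[0,−I],[I,0]]`. -/
def symplJ (n : ℕ) : Matrix (Fin n ⊕ Fin n) (Fin n ⊕ Fin n) ℝ :=
  Matrix.fromBlocks 0 (-1) 1 0

/-- The `ℂ`-linear action on `ℂ^{2n}` of a real `2n×2n` matrix. -/
def cAction {n : ℕ} (Θ : Matrix (Fin n ⊕ Fin n) (Fin n ⊕ Fin n) ℝ) : CV n →ₗ[ℂ] CV n :=
  (Θ.map (Complex.ofReal)).mulVecLin


/-- The form `(−σ_ℂ) ⊕ σ_ℂ` on `ℂ^{2n} × ℂ^{2n}`. -/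
def sigma2C (n : ℕ) :
    (CV n × CV n) →ₛₗ[starRingEnd ℂ] (CV n × CV n) →ₗ[ℂ] ℂ :=
  sesqProd (-(sigmaC n)) (sigmaC n)

/-- The form `(−σ_ℂ)^{⊕k} ⊕ σ_ℂ^{⊕k}` on `Σ^k × Σ^k`, `Σ = ℂ^{2n}`. -/
def bigSigmaC (n k : ℕ) :
    ((Fin k → CV n) × (Fin k → CV n)) →ₛₗ[starRingEnd ℂ]
      ((Fin k → CV n) × (Fin k → CV n)) →ₗ[ℂ] ℂ :=
  sesqProd (-(sesqPi k (sigmaC n))) (sesqPi k (sigmaC n))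

/-- The Lagrangian subspace `Π² = Π × Π` of `ℂ^{2n} × ℂ^{2n}`. -/
def Pi2Sub (n : ℕ) : Submodule ℂ (CV n × CV n) := (PiV n).prod (PiV n)

/-- The diagonal Lagrangian subspace `Δ = {(ξ,ξ)}` of `ℂ^{2n} × ℂ^{2n}`. -/
def DiaSub (n : ℕ) : Submodule ℂ (CV n × CV n) :=
  LinearMap.graph (LinearMap.id : CV n →ₗ[ℂ] CV n)

/-- The Lagrangian subspace `Π^{2k} = Π × ⋯ × Π` of `Σ^k × Σ^k`. -/
def Pi2kSub (n k : ℕ) : Submodule ℂ ((Fin k → CV n) × (Fin k → CV n)) :=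
  (Submodule.pi Set.univ fun _ : Fin k => PiV n).prod
    (Submodule.pi Set.univ fun _ : Fin k => PiV n)

/-- The graph `Γ = {(ξ1,…,ξk,Θξ1,…,Θξk)}` of the diagonal action of `Θ` on `Σ^k`. -/
def GamSub (n k : ℕ) (Θ : Matrix (Fin n ⊕ Fin n) (Fin n ⊕ Fin n) ℝ) :
    Submodule ℂ ((Fin k → CV n) × (Fin k → CV n)) :=
  LinearMap.graph (LinearMap.pi fun i : Fin k => (cAction Θ).comp (LinearMap.proj i))

/-- The graph `Δ^↺ = {(ξ1,…,ξk,ξ2,…,ξk,ξ1)}` of the cyclic shift on `Σ^k`. -/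
def DcycSub (n k : ℕ) [NeZero k] : Submodule ℂ ((Fin k → CV n) × (Fin k → CV n)) :=
  LinearMap.graph (LinearMap.funLeft ℂ (CV n) (fun i : Fin k => i + 1))

/-- negative index of a function on a space -/
def negIdx {V : Type*} [AddCommGroup V] [Module ℂ V] (q : V → ℂ) : ℕ :=
  sSup {d : ℕ | ∃ S : Submodule ℂ V, (∀ v ∈ S, v ≠ 0 → q v < 0) ∧ Module.finrank ℂ ↥S = d}

theorem maslov_eq_negIdx {W : Type*} [AddCommGroup W] [Module ℂ W]
    (f : W →ₛₗ[starRingEnd ℂ] W →ₗ[ℂ] ℂ) (L0 L1 L2 : Submodule ℂ W)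
    (q : ↥(L1 ⊓ (L0 ⊔ L2)) → ℂ)
    (hq : ∀ v : ↥(L1 ⊓ (L0 ⊔ L2)), ∀ l0 ∈ L0, ∀ l2 ∈ L2, (v : W) = l0 + l2 → f l0 l2 = q v) :
    maslovIndexC f L0 L1 L2 = negIdx q := by
  unfold maslovIndexC negIdx
  congr 1
  ext d
  constructor
  · rintro ⟨S, hS, hn, hd⟩
    refine ⟨S.comap (L1 ⊓ (L0 ⊔ L2)).subtype, ?_, ?_⟩
    · intro v hv hv0
      obtain ⟨l0, h0, l2, h2, h⟩ := Submodule.mem_sup.1 v.2.2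
      rw [← hq v l0 h0 l2 h2 h.symm]
      exact hn v hv (by simpa using hv0) l0 h0 l2 h2 h.symm
    · rw [← hd]
      exact (Submodule.comapSubtypeEquivOfLe hS).finrank_eq
  · rintro ⟨S, hn, hd⟩
    refine ⟨S.map (L1 ⊓ (L0 ⊔ L2)).subtype, Submodule.map_subtype_le _ _, ?_, ?_⟩
    · rintro _ ⟨v, hv, rfl⟩ hv0 l0 h0 l2 h2 h
      rw [hq v l0 h0 l2 h2 h]
      exact hn v hv (by rintro rfl; simp at hv0)
    · rw [← hd]
      exact (Submodule.equivMapOfInjective _ (Submodule.subtype_injective _) S).symm.finrank_eq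

theorem negIdx_equiv {V V' : Type*} [AddCommGroup V] [Module ℂ V] [AddCommGroup V'] [Module ℂ V']
    (e : V ≃ₗ[ℂ] V') (q : V → ℂ) (q' : V' → ℂ) (h : ∀ v, q v = q' (e v)) :
    negIdx q = negIdx q' := by
  unfold negIdx
  congr 1
  ext d
  constructor
  · rintro ⟨S, hn, hd⟩
    refine ⟨S.map e.toLinearMap, ?_, ?_⟩
    · rintro _ ⟨v, hv, rfl⟩ hv0
      have := hn v hv (by rintro rfl; simp at hv0)
      rw [h] at this
      exact this
    · rw [← hd]
      exact (e.submoduleMap S).symm.finrank_eq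
  · rintro ⟨S, hn, hd⟩
    refine ⟨S.map e.symm.toLinearMap, ?_, ?_⟩
    · rintro _ ⟨v, hv, rfl⟩ hv0
      rw [h]
      have := hn v hv (by rintro rfl; simp at hv0)
      simpa using this
    · rw [← hd]
      exact (e.symm.submoduleMap S).symm.finrank_eq

theorem negIdx_bdd {V : Type*} [AddCommGroup V] [Module ℂ V] [FiniteDimensional ℂ V]
    (q : V → ℂ) :
    BddAbove {d : ℕ | ∃ S : Submodule ℂ V, (∀ v ∈ S, v ≠ 0 → q v < 0) ∧
      Module.finrank ℂ ↥S = d} := by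
  refine ⟨Module.finrank ℂ V, ?_⟩
  rintro d ⟨S, _, rfl⟩
  exact Submodule.finrank_le S

theorem negIdx_exists {V : Type*} [AddCommGroup V] [Module ℂ V] [FiniteDimensional ℂ V]
    (q : V → ℂ) : ∃ S : Submodule ℂ V, (∀ v ∈ S, v ≠ 0 → q v < 0) ∧
      Module.finrank ℂ ↥S = negIdx q := by
  refine Nat.sSup_mem (s := {d : ℕ | ∃ S : Submodule ℂ V, (∀ v ∈ S, v ≠ 0 → q v < 0) ∧
      Module.finrank ℂ ↥S = d}) ⟨0, ⊥, ?_, by simp⟩ (negIdx_bdd q)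
  intro v hv hv0
  exact absurd (by simpa using hv) hv0

theorem negIdx_le {V : Type*} [AddCommGroup V] [Module ℂ V] [FiniteDimensional ℂ V]
    (q : V → ℂ) (S : Submodule ℂ V) (hS : ∀ v ∈ S, v ≠ 0 → q v < 0) :
    Module.finrank ℂ ↥S ≤ negIdx q :=
  le_csSup (negIdx_bdd q) ⟨S, hS, rfl⟩

/-- vectors orthogonal to a maximal negative subspace are nonnegative -/
theorem orth_nonneg {V : Type*} [AddCommGroup V] [Module ℂ V] [FiniteDimensional ℂ V]
    (h : V →ₛₗ[starRingEnd ℂ] V →ₗ[ℂ] ℂ) (hh : ∀ v w, h v w = starRingEnd ℂ (h w v))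
    (N : Submodule ℂ V) (hN : ∀ v ∈ N, v ≠ 0 → h v v < 0)
    (hmax : Module.finrank ℂ ↥N = negIdx (fun v => h v v))
    (v : V) (hv : ∀ u ∈ N, h u v = 0) : 0 ≤ h v v := by
  have him : (h v v).im = 0 := by
    have := congrArg Complex.im (hh v v)
    simp at this
    linarith
  by_contra hneg
  have hlt : h v v < 0 := by
    rw [Complex.lt_def]
    refine ⟨?_, by simpa using him⟩
    by_contra h'
    apply hneg
    rw [Complex.le_def]
    simp at h' ⊢
    exact ⟨h', him.symm⟩
  have hvN : v ∉ N := by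
    intro hvN
    rw [hv v hvN] at hlt
    exact lt_irrefl _ hlt
  have hv0 : v ≠ 0 := by
    rintro rfl
    exact hvN N.zero_mem
  have hle := negIdx_le (fun v => h v v) (N ⊔ Submodule.span ℂ {v}) (by
    intro w hw hw0
    obtain ⟨u, hu, z, hz, rfl⟩ := Submodule.mem_sup.1 hw
    obtain ⟨c, rfl⟩ := Submodule.mem_span_singleton.1 hz
    have h1 : h u v = 0 := hv u hu
    have h2 : h v u = 0 := by rw [hh, h1]; simp
    have h3 : h (u + c • v) (u + c • v) = h u u + (starRingEnd ℂ c * c) * h v v := by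
      simp [LinearMap.map_smulₛₗ, h1, h2]
      ring
    show h (u + c • v) (u + c • v) < 0
    rw [h3]
    have hu' : h u u ≤ 0 := by
      by_cases h0 : u = 0
      · simp [h0]
      · exact (hN u hu h0).le
    by_cases hc : c = 0
    · subst hc
      have : u ≠ 0 := by simpa using hw0
      simpa using hN u hu this
    · have hpos : 0 < starRingEnd ℂ c * c := by
        rw [mul_comm, Complex.mul_conj]
        exact_mod_cast Complex.normSq_pos.2 hc
      have := mul_neg_of_pos_of_neg hpos hlt
      exact add_neg_of_nonpos_of_neg hu' this)
  have hlt' : Module.finrank ℂ ↥N < Module.finrank ℂ ↥(N ⊔ Submodule.span ℂ {v}) := by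
    apply Submodule.finrank_lt_finrank_of_lt
    refine lt_of_le_of_ne le_sup_left ?_
    intro heq
    apply hvN
    rw [heq]
    exact Submodule.mem_sup_right (Submodule.mem_span_singleton_self v)
  omega

theorem negIdx_pi {ι : Type} [Fintype ι] [DecidableEq ι] (V : ι → Type)
    [∀ l, AddCommGroup (V l)] [∀ l, Module ℂ (V l)] [∀ l, FiniteDimensional ℂ (V l)]
    (h : ∀ l, V l →ₛₗ[starRingEnd ℂ] V l →ₗ[ℂ] ℂ)
    (hh : ∀ l v w, h l v w = starRingEnd ℂ (h l w v)) :
    negIdx (fun v : (l : ι) → V l => ∑ l, h l (v l) (v l)) =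
      ∑ l, negIdx (fun v : V l => h l v v) := by
  choose N hN hd using fun l => negIdx_exists (fun v : V l => h l v v)
  apply le_antisymm
  · obtain ⟨S, hS, hSd⟩ := negIdx_exists (fun v : (l : ι) → V l => ∑ l, h l (v l) (v l))
    rw [← hSd]
    let T : ((l : ι) → V l) →ₗ[ℂ] ((l : ι) → Fin (Module.finrank ℂ (N l)) → ℂ) :=
      LinearMap.pi fun l => (LinearMap.pi fun j =>
        (h l (Module.finBasis ℂ (N l) j : V l))).comp (LinearMap.proj l)
    have hT : Function.Injective (T.domRestrict S) := by
      rw [← LinearMap.ker_eq_bot, LinearMap.ker_eq_bot']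
      rintro ⟨v, hv⟩ hTv
      have key : ∀ l, 0 ≤ h l (v l) (v l) := by
        intro l
        apply orth_nonneg (h l) (hh l) (N l) (hN l) (hd l)
        intro u hu
        have hrep := (Module.finBasis ℂ (N l)).sum_repr ⟨u, hu⟩
        have hu2 : u = ∑ j, (Module.finBasis ℂ (N l)).repr ⟨u, hu⟩ j •
            (Module.finBasis ℂ (N l) j : V l) := by
          have := congrArg (N l).subtype hrep
          simp only [map_sum, map_smul, Submodule.subtype_apply] at this
          exact this.symm
        rw [hu2]
        simp only [map_sum, LinearMap.sum_apply, LinearMap.map_smulₛₗ, LinearMap.smul_apply]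
        apply Finset.sum_eq_zero
        intro j _
        have : T v l j = 0 := by
          have := congrFun (congrFun hTv l) j
          exact this
        have h2 : h l (Module.finBasis ℂ (N l) j : V l) (v l) = 0 := this
        rw [h2]; simp
      by_contra hne
      have hv0 : v ≠ 0 := by
        rintro rfl
        exact hne rfl
      have h1 := hS v hv hv0
      have h2 : 0 ≤ ∑ l, h l (v l) (v l) := Finset.sum_nonneg fun l _ => key l
      exact absurd h1 (not_lt_of_ge h2)
    have := LinearMap.finrank_le_finrank_of_injective hT
    refine this.trans (le_of_eq ?_)
    rw [Module.finrank_pi_fintype]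
    simp [hd]
  · have hle := negIdx_le (fun v : (l : ι) → V l => ∑ l, h l (v l) (v l))
      (Submodule.pi Set.univ N) (by
        intro v hv hv0
        have hv' : ∀ l, v l ∈ N l := fun l => hv l (Set.mem_univ l)
        obtain ⟨l, hl⟩ := Function.ne_iff.1 hv0
        refine Finset.sum_neg' ?_ ⟨l, Finset.mem_univ l, hN l _ (hv' l) hl⟩
        intro j _
        by_cases h0 : v j = 0
        · simp [h0]
        · exact (hN j _ (hv' j) h0).le)
    refine le_trans (le_of_eq ?_) hle
    have e : ↥(Submodule.pi Set.univ N) ≃ₗ[ℂ] ((l : ι) → N l) :=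
      { toFun := fun v l => ⟨v.1 l, v.2 l (Set.mem_univ l)⟩
        invFun := fun v => ⟨fun l => (v l : V l), fun l _ => (v l).2⟩
        map_add' := fun _ _ => rfl
        map_smul' := fun _ _ => rfl
        left_inv := fun _ => rfl
        right_inv := fun _ => rfl }
    rw [e.finrank_eq, Module.finrank_pi_fintype]
    simp [hd]


theorem sigmaC_apply (n : ℕ) (x y : CV n) : sigmaC n x y =
    (∑ i : Fin n, (starRingEnd ℂ) (x (Sum.inl i)) * y (Sum.inr i)) -
      ∑ i : Fin n, (starRingEnd ℂ) (x (Sum.inr i)) * y (Sum.inl i) := rfl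

theorem sigmaC_skew (n : ℕ) (x y : CV n) : starRingEnd ℂ (sigmaC n x y) = - sigmaC n y x := by
  simp only [sigmaC_apply, map_sub, map_sum, map_mul, Complex.conj_conj, neg_sub]
  congr 1 <;> exact Finset.sum_congr rfl (by intros; ring)

theorem sigmaC_Pi (n : ℕ) (x y : CV n) (hx : x ∈ PiV n) (hy : y ∈ PiV n) : sigmaC n x y = 0 := by
  have hx' : ∀ i, x (Sum.inr i) = 0 := hx
  have hy' : ∀ i, y (Sum.inr i) = 0 := hy
  simp [sigmaC_apply, hx', hy']

theorem sigmaC_matrix (n : ℕ) (x y : CV n) : sigmaC n x y =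
    dotProduct (star x) (((symplJ n).map Complex.ofReal).transpose.mulVec y) := by
  simp [sigmaC_apply, symplJ, dotProduct, Matrix.mulVec, Fintype.sum_sum_type, Matrix.one_apply,
    apply_ite, ite_mul, sub_eq_add_neg]

theorem sigmaC_sympl (n : ℕ) (Θ : Matrix (Fin n ⊕ Fin n) (Fin n ⊕ Fin n) ℝ)
    (hΘ : Θ.transpose * symplJ n * Θ = symplJ n) (x y : CV n) :
    sigmaC n (cAction Θ x) (cAction Θ y) = sigmaC n x y := by
  have h1 : (Θ.map Complex.ofReal).transpose * ((symplJ n).map Complex.ofReal).transpose *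
      (Θ.map Complex.ofReal) = ((symplJ n).map Complex.ofReal).transpose := by
    have h2 := congrArg (fun M => (Matrix.map (Matrix.transpose M) Complex.ofRealHom)) hΘ
    simp only [Matrix.transpose_mul, Matrix.transpose_transpose, Matrix.map_mul] at h2
    rw [← Matrix.mul_assoc] at h2
    exact h2
  have h3 : star ((Θ.map Complex.ofReal).mulVec x) =
      Matrix.vecMul (star x) (Θ.map Complex.ofReal).transpose := by
    rw [Matrix.star_mulVec]
    congr 1
    ext i j
    simp [Matrix.conjTranspose_apply]
  rw [sigmaC_matrix, sigmaC_matrix]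
  simp only [cAction, Matrix.mulVecLin_apply]
  rw [h3, ← Matrix.dotProduct_mulVec, Matrix.mulVec_mulVec, Matrix.mulVec_mulVec, h1]

theorem mem_small (n : ℕ) (M : CV n →ₗ[ℂ] CV n) (v : CV n × CV n) :
    v ∈ LinearMap.graph M ⊓ (Pi2Sub n ⊔ DiaSub n) ↔ v.2 = M v.1 ∧ v.2 - v.1 ∈ PiV n := by
  rw [Submodule.mem_inf, LinearMap.mem_graph_iff]
  refine and_congr_right fun _ => ?_
  rw [Submodule.mem_sup]
  constructor
  · rintro ⟨a, ha, b, hb, rfl⟩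
    have hb' : b.2 = b.1 := hb
    have : (a + b).2 - (a + b).1 = a.2 - a.1 := by
      simp [hb']
    rw [this]
    exact Submodule.sub_mem _ ha.2 ha.1
  · intro h
    refine ⟨(0, v.2 - v.1), ⟨Submodule.zero_mem _, h⟩, (v.1, v.1), ?_, ?_⟩
    · simp [DiaSub, LinearMap.mem_graph_iff]
    · ext <;> simp

theorem mem_big (n k : ℕ) [NeZero k] (Θ : Matrix (Fin n ⊕ Fin n) (Fin n ⊕ Fin n) ℝ)
    (v : (Fin k → CV n) × (Fin k → CV n)) :
    v ∈ GamSub n k Θ ⊓ (Pi2kSub n k ⊔ DcycSub n k) ↔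
      (∀ i, v.2 i = cAction Θ (v.1 i)) ∧ ∀ i, v.2 i - v.1 (i + 1) ∈ PiV n := by
  rw [Submodule.mem_inf, GamSub, LinearMap.mem_graph_iff, funext_iff]
  refine and_congr_right fun _ => ?_
  rw [Submodule.mem_sup]
  constructor
  · rintro ⟨a, ha, b, hb, rfl⟩ i
    have hb' : b.2 i = b.1 (i + 1) := congrFun hb i
    have : (a + b).2 i - (a + b).1 (i + 1) = a.2 i - a.1 (i + 1) := by
      simp [hb']
    rw [this]
    exact Submodule.sub_mem _ (ha.2 i (Set.mem_univ _)) (ha.1 (i + 1) (Set.mem_univ _))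
  · intro h
    refine ⟨(0, fun i => v.2 i - v.1 (i + 1)), ⟨Submodule.zero_mem _, fun i _ => h i⟩,
      (v.1, fun i => v.1 (i + 1)), ?_, ?_⟩
    · rfl
    · ext <;> simp

theorem form_small (n : ℕ) (v a b : CV n × CV n) (ha : a ∈ Pi2Sub n) (hb : b ∈ DiaSub n)
    (h : v = a + b) : sigma2C n a b = sigmaC n v.2 v.1 - sigmaC n v.1 v.1 := by
  have hb' : b.2 = b.1 := hb
  have e1 : sigma2C n a b = - sigmaC n a.1 b.1 + sigmaC n a.2 b.2 := rfl
  have h1 := sigmaC_Pi n _ _ ha.1 ha.1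
  have h2 := sigmaC_Pi n _ _ ha.2 ha.1
  rw [e1, h]
  simp [hb', h1, h2]
  ring

theorem form_big (n k : ℕ) [NeZero k] (v a b : (Fin k → CV n) × (Fin k → CV n))
    (ha : a ∈ Pi2kSub n k) (hb : b ∈ DcycSub n k)
    (h : v = a + b) : bigSigmaC n k a b =
      ∑ i, sigmaC n (v.2 i) (v.1 (i + 1)) - ∑ i, sigmaC n (v.1 i) (v.1 i) := by
  have hb' : ∀ i, b.2 i = b.1 (i + 1) := fun i => congrFun hb i
  have e1 : bigSigmaC n k a b = - (∑ i, sigmaC n (a.1 i) (b.1 i)) +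
    ∑ i, sigmaC n (a.2 i) (b.2 i) := rfl
  have h1 := fun i => sigmaC_Pi n _ _ (ha.1 i (Set.mem_univ _)) (ha.1 i (Set.mem_univ _))
  have h2 := fun i => sigmaC_Pi n _ _ (ha.2 i (Set.mem_univ _)) (ha.1 (i + 1) (Set.mem_univ _))
  have hs : ∀ g : Fin k → ℂ, ∑ i, g (i + 1) = ∑ i, g i := fun g =>
    Equiv.sum_comp (Equiv.addRight (1 : Fin k)) g
  have hs1 := hs (fun i => sigmaC n (b.1 i) (b.1 i))
  have hs2 := hs (fun i => sigmaC n (b.1 i) (a.1 i))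
  rw [e1, h]
  simp only [hb', Prod.fst_add, Prod.snd_add, Pi.add_apply, map_add, LinearMap.add_apply, h1, h2,
    Finset.sum_add_distrib, hs1, hs2, Finset.sum_const_zero]
  ring

/-- form on a small piece -/
def smallForm (n : ℕ) (V : Submodule ℂ (CV n × CV n)) : ↥V →ₛₗ[starRingEnd ℂ] ↥V →ₗ[ℂ] ℂ :=
  LinearMap.mk₂'ₛₗ (starRingEnd ℂ) (RingHom.id ℂ)
    (fun v w => sigmaC n v.1.2 w.1.1 - sigmaC n v.1.1 w.1.1)
    (by intro x x' y; simp; ring)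
    (by intro c x y; simp [LinearMap.map_smulₛₗ, mul_sub])
    (by intro x x' y; simp; ring)
    (by intro c x y; simp [mul_sub])

theorem smallForm_herm (n : ℕ) (Θ : Matrix (Fin n ⊕ Fin n) (Fin n ⊕ Fin n) ℝ)
    (hΘ : Θ.transpose * symplJ n * Θ = symplJ n) (α : ℂ) (hα : starRingEnd ℂ α * α = 1)
    (v w : ↥(LinearMap.graph (α • cAction Θ) ⊓ (Pi2Sub n ⊔ DiaSub n))) :
    smallForm n _ v w = starRingEnd ℂ (smallForm n _ w v) := by
  obtain ⟨hv1, hv2⟩ := (mem_small _ _ _).1 v.2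
  obtain ⟨hw1, hw2⟩ := (mem_small _ _ _).1 w.2
  have h0 := sigmaC_Pi n _ _ hv2 hw2
  have h1 : sigmaC n v.1.2 w.1.2 = sigmaC n v.1.1 w.1.1 := by
    rw [hv1, hw1]
    simp only [LinearMap.smul_apply, LinearMap.map_smulₛₗ, sigmaC_sympl n Θ hΘ, smul_eq_mul,
      RingHom.id_apply]
    rw [← mul_assoc, mul_comm α, hα, one_mul]
  show sigmaC n v.1.2 w.1.1 - sigmaC n v.1.1 w.1.1 =
    starRingEnd ℂ (sigmaC n w.1.2 v.1.1 - sigmaC n w.1.1 v.1.1)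
  rw [map_sub, sigmaC_skew, sigmaC_skew]
  simp only [map_sub, LinearMap.sub_apply, h1] at h0
  linear_combination -h0

/-- Fourier transform -/
def dft (k : ℕ) (W : Type) [AddCommGroup W] [Module ℂ W] (ω : ℂ) :
    (Fin k → W) →ₗ[ℂ] (Fin k → W) :=
  LinearMap.pi fun l => ((Real.sqrt k : ℝ) : ℂ)⁻¹ •
    ∑ i : Fin k, (ω ^ ((i : ℕ) * (l : ℕ))) • LinearMap.proj i

theorem dft_apply (k : ℕ) (W : Type) [AddCommGroup W] [Module ℂ W] (ω : ℂ) (x : Fin k → W)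
    (l : Fin k) : dft k W ω x l = ((Real.sqrt k : ℝ) : ℂ)⁻¹ •
    ∑ i : Fin k, (ω ^ ((i : ℕ) * (l : ℕ))) • x i := by
  simp [dft]

theorem orthog (k : ℕ) [NeZero k] (ω : ℂ) (hω : IsPrimitiveRoot ω k) (i j : Fin k) :
    ∑ l : Fin k, (ω⁻¹ ^ ((i : ℕ) * (l : ℕ))) * ω ^ ((j : ℕ) * (l : ℕ)) =
      if i = j then (k : ℂ) else 0 := by
  have hk : k ≠ 0 := NeZero.ne k
  have hω0 : ω ≠ 0 := hω.ne_zero hk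
  have hz : ∀ l : Fin k, (ω⁻¹ ^ ((i : ℕ) * (l : ℕ))) * ω ^ ((j : ℕ) * (l : ℕ)) =
      (ω⁻¹ ^ (i : ℕ) * ω ^ (j : ℕ)) ^ (l : ℕ) := by
    intro l
    rw [mul_pow, pow_mul, pow_mul]
  simp only [hz]
  rw [Fin.sum_univ_eq_sum_range (fun l => (ω⁻¹ ^ (i : ℕ) * ω ^ (j : ℕ)) ^ l) k]
  have hzk : (ω⁻¹ ^ (i : ℕ) * ω ^ (j : ℕ)) ^ k = 1 := by
    rw [mul_pow, ← pow_mul, ← pow_mul, mul_comm (i : ℕ), mul_comm (j : ℕ), pow_mul, pow_mul,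
      inv_pow, hω.pow_eq_one]
    simp
  split_ifs with hij
  · subst hij
    simp [inv_mul_cancel₀ (pow_ne_zero _ hω0)]
  · have hne : ω⁻¹ ^ (i : ℕ) * ω ^ (j : ℕ) ≠ 1 := by
      intro h1
      apply hij
      apply Fin.ext
      apply hω.pow_inj i.2 j.2
      rw [inv_pow] at h1
      exact ((inv_mul_eq_one₀ (pow_ne_zero _ hω0)).1 h1)
    have := geom_sum_mul (ω⁻¹ ^ (i : ℕ) * ω ^ (j : ℕ)) k
    rw [hzk, sub_self] at this
    exact (mul_eq_zero.1 this).resolve_right (sub_ne_zero.2 hne)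

theorem sqrt_inv_sq (k : ℕ) [NeZero k] :
    ((Real.sqrt k : ℝ) : ℂ)⁻¹ * ((Real.sqrt k : ℝ) : ℂ)⁻¹ * k = 1 := by
  have h : ((Real.sqrt k : ℝ) : ℂ) * ((Real.sqrt k : ℝ) : ℂ) = k := by
    rw [← Complex.ofReal_mul, Real.mul_self_sqrt (Nat.cast_nonneg k)]
    simp
  rw [← mul_inv, h]
  exact inv_mul_cancel₀ (Nat.cast_ne_zero.2 (NeZero.ne k))

theorem dft_inv (k : ℕ) [NeZero k] (W : Type) [AddCommGroup W] [Module ℂ W] (ω : ℂ)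
    (hω : IsPrimitiveRoot ω k) (x : Fin k → W) : dft k W ω⁻¹ (dft k W ω x) = x := by
  funext i
  simp only [dft_apply, Finset.smul_sum, smul_smul]
  rw [Finset.sum_comm]
  simp only [← Finset.sum_smul]
  have : ∀ j : Fin k, ∑ l : Fin k, ((Real.sqrt k : ℝ) : ℂ)⁻¹ * (ω⁻¹ ^ ((l : ℕ) * (i : ℕ)) *
      (((Real.sqrt k : ℝ) : ℂ)⁻¹ * ω ^ ((j : ℕ) * (l : ℕ)))) = if i = j then 1 else 0 := by
    intro j
    have h1 := orthog k ω hω i j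
    have h2 := sqrt_inv_sq k
    calc _ = ((Real.sqrt k : ℝ) : ℂ)⁻¹ * ((Real.sqrt k : ℝ) : ℂ)⁻¹ * ∑ l : Fin k,
          (ω⁻¹ ^ ((i : ℕ) * (l : ℕ))) * ω ^ ((j : ℕ) * (l : ℕ)) := by
          rw [Finset.mul_sum]
          refine Finset.sum_congr rfl fun l _ => ?_
          rw [mul_comm (l : ℕ)]
          ring
      _ = _ := by
          rw [h1]
          split_ifs
          · exact h2
          · simp
  simp only [this, ite_smul, one_smul, zero_smul, Finset.sum_ite_eq, Finset.mem_univ, if_true]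

theorem dft_parseval (k : ℕ) [NeZero k] (W : Type) [AddCommGroup W] [Module ℂ W] (ω : ℂ)
    (hω : IsPrimitiveRoot ω k) (f : W →ₛₗ[starRingEnd ℂ] W →ₗ[ℂ] ℂ) (x y : Fin k → W) :
    ∑ l, f (dft k W ω x l) (dft k W ω y l) = ∑ i, f (x i) (y i) := by
  have hc : starRingEnd ℂ ω = ω⁻¹ := by
    rw [Complex.inv_def, Complex.normSq_eq_norm_sq, hω.norm'_eq_one (NeZero.ne k)]
    simp
  have key : ∀ l : Fin k, f (dft k W ω x l) (dft k W ω y l) = ∑ i, ∑ j,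
     (((Real.sqrt k : ℝ) : ℂ)⁻¹ * ((Real.sqrt k : ℝ) : ℂ)⁻¹ * f (x i) (y j)) *
     ((ω⁻¹ ^ ((i : ℕ) * (l : ℕ))) * ω ^ ((j : ℕ) * (l : ℕ))) := by
    intro l
    simp only [dft_apply, LinearMap.map_smulₛₗ, map_sum, LinearMap.sum_apply, LinearMap.smul_apply,
      Finset.smul_sum, smul_eq_mul, RingHom.id_apply, map_pow, hc, map_inv₀, Complex.conj_ofReal]
    simp only [Finset.mul_sum]
    rw [Finset.sum_comm]
    refine Finset.sum_congr rfl fun i _ => Finset.sum_congr rfl fun j _ => ?_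
    ring
  simp only [key]
  rw [Finset.sum_comm]
  refine Finset.sum_congr rfl fun i _ => ?_
  rw [Finset.sum_comm]
  simp only [← Finset.mul_sum, orthog k ω hω]
  simp only [mul_ite, mul_zero, Finset.sum_ite_eq, Finset.mem_univ, if_true]
  linear_combination f (x i) (y i) * sqrt_inv_sq k

theorem dft_shift (k : ℕ) [NeZero k] (W : Type) [AddCommGroup W] [Module ℂ W] (ω : ℂ)
    (hω : IsPrimitiveRoot ω k) (x : Fin k → W) (l : Fin k) :
    ω ^ (l : ℕ) • dft k W ω (fun i => x (i + 1)) l = dft k W ω x l := by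
  rw [dft_apply, dft_apply, smul_comm, Finset.smul_sum]
  congr 1
  rw [← Equiv.sum_comp (Equiv.addRight (1 : Fin k))
    (fun i : Fin k => ω ^ ((i : ℕ) * (l : ℕ)) • x i)]
  refine Finset.sum_congr rfl fun i _ => ?_
  rw [smul_smul]
  congr 1
  show _ = ω ^ (((i + 1 : Fin k) : ℕ) * (l : ℕ))
  have : ω ^ ((i + 1 : Fin k) : ℕ) = ω ^ ((i : ℕ) + 1) := by
    rw [Fin.val_add, Fin.val_one', Nat.add_mod_mod]
    exact (pow_eq_pow_mod _ hω.pow_eq_one).symm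
  rw [pow_mul ω ((i + 1 : Fin k) : ℕ), this, ← pow_mul, ← pow_add]
  congr 1
  ring

theorem dft_map (k : ℕ) (W : Type) [AddCommGroup W] [Module ℂ W] (ω : ℂ)
    (M : W →ₗ[ℂ] W) (x : Fin k → W) (l : Fin k) :
    dft k W ω (fun i => M (x i)) l = M (dft k W ω x l) := by
  simp [dft_apply]

theorem dft_mem (k : ℕ) (W : Type) [AddCommGroup W] [Module ℂ W] (ω : ℂ)
    (P : Submodule ℂ W) (x : Fin k → W) (hx : ∀ i, x i ∈ P) (l : Fin k) :
    dft k W ω x l ∈ P := by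
  rw [dft_apply]
  exact P.smul_mem _ (P.sum_mem fun i _ => P.smul_mem _ (hx i))

/-- the inverse Fourier transform undoes modulation into shift -/
theorem dft_inv_shift (k : ℕ) [NeZero k] (W : Type) [AddCommGroup W] [Module ℂ W] (ω : ℂ)
    (hω : IsPrimitiveRoot ω k) (x : Fin k → W) (i : Fin k) :
    dft k W ω⁻¹ (fun l => (ω ^ (l : ℕ))⁻¹ • x l) i = dft k W ω⁻¹ x (i + 1) := by
  have hω0 : ω ≠ 0 := hω.ne_zero (NeZero.ne k)
  have hinv := dft_inv k W ω⁻¹ hω.inv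
  rw [inv_inv] at hinv
  have h : (fun l : Fin k => (ω ^ (l : ℕ))⁻¹ • x l) =
      dft k W ω (fun i => dft k W ω⁻¹ x (i + 1)) := by
    funext l
    rw [inv_smul_eq_iff₀ (pow_ne_zero _ hω0), dft_shift k W ω hω, hinv]
  rw [h, dft_inv k W ω hω]

/-- the isometry -/
def splitEquiv (n k : ℕ) [NeZero k] (Θ : Matrix (Fin n ⊕ Fin n) (Fin n ⊕ Fin n) ℝ)
    (ω : ℂ) (hω : IsPrimitiveRoot ω k) :
    ↥(GamSub n k Θ ⊓ (Pi2kSub n k ⊔ DcycSub n k)) ≃ₗ[ℂ]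
        ((l : Fin k) →
          ↥(LinearMap.graph ((ω ^ (l : ℕ)) • cAction Θ) ⊓ (Pi2Sub n ⊔ DiaSub n))) where
  toFun v l := ⟨(dft k (CV n) ω v.1.1 l, (ω ^ (l : ℕ)) • cAction Θ (dft k (CV n) ω v.1.1 l)), by
    obtain ⟨h1, h2⟩ := (mem_big n k Θ _).1 v.2
    rw [mem_small]
    refine ⟨rfl, ?_⟩
    show (ω ^ (l : ℕ)) • cAction Θ (dft k (CV n) ω v.1.1 l) - dft k (CV n) ω v.1.1 l ∈ PiV n
    have : (ω ^ (l : ℕ)) • cAction Θ (dft k (CV n) ω v.1.1 l) - dft k (CV n) ω v.1.1 l =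
        ω ^ (l : ℕ) • dft k (CV n) ω (fun i => v.1.2 i - v.1.1 (i + 1)) l := by
      have e1 : (fun i => v.1.2 i - v.1.1 (i + 1)) =
        (fun i => cAction Θ (v.1.1 i)) - fun i => v.1.1 (i + 1) := by
        funext i; simp [h1]
      rw [e1, map_sub, Pi.sub_apply, smul_sub, dft_shift k _ ω hω, dft_map]
    rw [this]
    exact Submodule.smul_mem _ _ (dft_mem _ _ _ _ _ h2 _)⟩
  invFun x := ⟨(dft k (CV n) ω⁻¹ (fun l => (x l).1.1),
      fun i => cAction Θ (dft k (CV n) ω⁻¹ (fun l => (x l).1.1) i)), by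
    have hω0 : ω ≠ 0 := hω.ne_zero (NeZero.ne k)
    rw [mem_big]
    refine ⟨fun _ => rfl, fun i => ?_⟩
    show cAction Θ (dft k (CV n) ω⁻¹ (fun l => (x l).1.1) i) -
      dft k (CV n) ω⁻¹ (fun l => (x l).1.1) (i + 1) ∈ PiV n
    rw [← dft_inv_shift k _ ω hω, ← dft_map, ← Pi.sub_apply, ← map_sub]
    apply dft_mem
    intro l
    obtain ⟨h1, h2⟩ := (mem_small n _ _).1 (x l).2
    rw [h1] at h2
    have := (PiV n).smul_mem (ω ^ (l : ℕ))⁻¹ h2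
    rw [smul_sub, LinearMap.smul_apply, inv_smul_smul₀ (pow_ne_zero _ hω0)] at this
    exact this⟩
  map_add' v w := by
    funext l
    apply Subtype.ext
    simp
  map_smul' c v := by
    funext l
    apply Subtype.ext
    simp [smul_comm c]
  left_inv v := by
    obtain ⟨h1, h2⟩ := (mem_big n k Θ _).1 v.2
    apply Subtype.ext
    have := dft_inv k (CV n) ω hω v.1.1
    refine Prod.ext this ?_
    funext i
    show cAction Θ (dft k (CV n) ω⁻¹ (dft k (CV n) ω v.1.1) i) = v.1.2 i
    rw [this, h1]
  right_inv x := by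
    funext l
    obtain ⟨h1, h2⟩ := (mem_small n _ _).1 (x l).2
    have hinv := dft_inv k (CV n) ω⁻¹ hω.inv (fun l => (x l).1.1)
    rw [inv_inv] at hinv
    apply Subtype.ext
    refine Prod.ext (congrFun hinv l) ?_
    show (ω ^ (l : ℕ)) • cAction Θ (dft k (CV n) ω (dft k (CV n) ω⁻¹ (fun l => (x l).1.1)) l) = _
    rw [hinv, h1]
    rfl

theorem split_isom (n k : ℕ) [NeZero k] (Θ : Matrix (Fin n ⊕ Fin n) (Fin n ⊕ Fin n) ℝ)
    (ω : ℂ) (hω : IsPrimitiveRoot ω k)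
    (v : ↥(GamSub n k Θ ⊓ (Pi2kSub n k ⊔ DcycSub n k))) :
    ∑ i, sigmaC n (v.1.2 i) (v.1.1 (i + 1)) - ∑ i, sigmaC n (v.1.1 i) (v.1.1 i) =
    ∑ l : Fin k, smallForm n _ (splitEquiv n k Θ ω hω v l) (splitEquiv n k Θ ω hω v l) := by
  obtain ⟨h1, h2⟩ := (mem_big n k Θ _).1 v.2
  have hω0 : ω ≠ 0 := hω.ne_zero (NeZero.ne k)
  have hc : starRingEnd ℂ ω = ω⁻¹ := by
    rw [Complex.inv_def, Complex.normSq_eq_norm_sq, hω.norm'_eq_one (NeZero.ne k)]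
    simp
  have e1 : ∀ l : Fin k, smallForm n _ (splitEquiv n k Θ ω hω v l) (splitEquiv n k Θ ω hω v l) =
    sigmaC n (dft k (CV n) ω v.1.2 l) (dft k (CV n) ω (fun i => v.1.1 (i + 1)) l) -
    sigmaC n (dft k (CV n) ω v.1.1 l) (dft k (CV n) ω v.1.1 l) := by
    intro l
    show sigmaC n ((ω ^ (l : ℕ)) • cAction Θ (dft k (CV n) ω v.1.1 l)) (dft k (CV n) ω v.1.1 l) -
      sigmaC n (dft k (CV n) ω v.1.1 l) (dft k (CV n) ω v.1.1 l) = _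
    congr 1
    have e2 : v.1.2 = fun i => cAction Θ (v.1.1 i) := funext h1
    rw [e2, dft_map]
    have hs := dft_shift k _ ω hω v.1.1 l
    rw [← eq_inv_smul_iff₀ (pow_ne_zero _ hω0)] at hs
    rw [hs]
    simp [LinearMap.map_smulₛₗ, hc]
  simp only [e1, Finset.sum_sub_distrib]
  rw [dft_parseval k _ ω hω, dft_parseval k _ ω hω]


/-- the Maslov form `m(Π^{2k}, Γ, Δ^↺)` of the iterated system is linearly
isometric to the direct sum `⊕_{l=0}^{k−1} m(Π², Γ(ω^lΘ), Δ)`; in particular the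
negative Maslov indices add up. -/
theorem maslov_form_iteration_splitting
    (n k : ℕ) [NeZero k] (Θ : Matrix (Fin n ⊕ Fin n) (Fin n ⊕ Fin n) ℝ)
    (hΘ : Θ.transpose * symplJ n * Θ = symplJ n) (hk : 1 ≤ k) (ω : ℂ) (hω : IsPrimitiveRoot ω k) :
    (∃ e : ↥(GamSub n k Θ ⊓ (Pi2kSub n k ⊔ DcycSub n k)) ≃ₗ[ℂ]
        ((l : Fin k) →
          ↥(LinearMap.graph ((ω ^ (l : ℕ)) • cAction Θ) ⊓ (Pi2Sub n ⊔ DiaSub n))),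
      ∀ (v : ↥(GamSub n k Θ ⊓ (Pi2kSub n k ⊔ DcycSub n k)))
        (a b : (Fin k → CV n) × (Fin k → CV n)),
        a ∈ Pi2kSub n k → b ∈ DcycSub n k →
        (v : (Fin k → CV n) × (Fin k → CV n)) = a + b →
        ∀ (A B : Fin k → CV n × CV n),
          (∀ l, A l ∈ Pi2Sub n) → (∀ l, B l ∈ DiaSub n) →
          (∀ l, ((e v l : CV n × CV n)) = A l + B l) →
          bigSigmaC n k a b = ∑ l : Fin k, sigma2C n (A l) (B l)) ∧
    maslovIndexC (bigSigmaC n k) (Pi2kSub n k) (GamSub n k Θ) (DcycSub n k)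
      = ∑ l : Fin k,
          maslovIndexC (sigma2C n) (Pi2Sub n)
            (LinearMap.graph ((ω ^ (l : ℕ)) • cAction Θ)) (DiaSub n) := by
  have hα : ∀ l : Fin k, starRingEnd ℂ (ω ^ (l : ℕ)) * ω ^ (l : ℕ) = 1 := by
    intro l
    rw [← Complex.normSq_eq_conj_mul_self, Complex.normSq_eq_norm_sq, norm_pow,
      hω.norm'_eq_one (NeZero.ne k)]
    simp
  have hsmall : ∀ (l : Fin k)
      (v : ↥(LinearMap.graph ((ω ^ (l : ℕ)) • cAction Θ) ⊓ (Pi2Sub n ⊔ DiaSub n)))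
      (a : CV n × CV n), a ∈ Pi2Sub n → ∀ b ∈ DiaSub n, (v : CV n × CV n) = a + b →
      sigma2C n a b = smallForm n _ v v :=
    fun l v a ha b hb h => form_small n v a b ha hb h
  have hbig : ∀ (v : ↥(GamSub n k Θ ⊓ (Pi2kSub n k ⊔ DcycSub n k)))
      (a : (Fin k → CV n) × (Fin k → CV n)), a ∈ Pi2kSub n k → ∀ b ∈ DcycSub n k,
      (v : (Fin k → CV n) × (Fin k → CV n)) = a + b →
      bigSigmaC n k a b = ∑ l : Fin k, smallForm n _ (splitEquiv n k Θ ω hω v l)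
        (splitEquiv n k Θ ω hω v l) := by
    intro v a ha b hb h
    rw [form_big n k v a b ha hb h, split_isom]
  refine ⟨⟨splitEquiv n k Θ ω hω, ?_⟩, ?_⟩
  · intro v a b ha hb h A B hA hB hAB
    rw [hbig v a ha b hb h]
    exact Finset.sum_congr rfl fun l _ => (hsmall l _ _ (hA l) _ (hB l) (hAB l)).symm
  · rw [maslov_eq_negIdx _ _ _ _ _ hbig]
    rw [negIdx_equiv (splitEquiv n k Θ ω hω) _
      (fun x => ∑ l : Fin k, smallForm n _ (x l) (x l)) (fun _ => rfl)]
    rw [negIdx_pi _ _ (fun l => smallForm_herm n Θ hΘ _ (hα l))]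
    exact Finset.sum_congr rfl fun l _ => (maslov_eq_negIdx _ _ _ _ _ (hsmall l)).symm


end
end
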